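/- arXiv:1508.06955 — 7 statements merged into one kernel-verified Lean document; each statement's English description precedes it below -/
import Mathlib

section
/- Let r₀ ∈ (0,1) and let Φ : [0,r₀) → [0,+∞] be Lebesgue-integrable on [0,r₀). Let f be holomorphic on 𝔻 and suppose that |f'(r·e^{iθ})| ≤ Φ(1−r) for all r with 1−r₀ < r < 1 and all θ ∈ ℝ. Then f extends continuously to the closed unit disc, i.e., there exists a continuous function F on the closed unit disc with F = f on 𝔻. -/
open MeasureTheory

/-!
The dilates `z ↦ f ((1 - a) z)`, with `a ↓ 0`, are continuous on the closed disc and converge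
pointwise to `f` on the open disc, so it suffices that they are uniformly Cauchy on the closed
disc. On the unit circle the difference of two dilates is the integral of the radial derivative
of `f`, hence at most `∫₀ᵇ Φ` with `b` the larger parameter (`norm_dilate_sub_le_circle`); the
maximum modulus principle carries this bound to the whole disc (`norm_dilate_sub_le`). Finally
`∫₀ᵇ Φ → 0` as `b ↓ 0` by absolute continuity of the integral.
-/

lemma dilate_mem_ball {a : ℝ} (ha : 0 < a) (ha1 : a < 1) {z : ℂ}
    (hz : z ∈ Metric.closedBall (0:ℂ) 1) : ((1 - a : ℝ) : ℂ) * z ∈ Metric.ball (0:ℂ) 1 := by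
  rw [mem_closedBall_zero_iff] at hz
  rw [mem_ball_zero_iff, norm_mul, Complex.norm_real, Real.norm_of_nonneg (by linarith)]
  nlinarith [norm_nonneg z]

lemma norm_dilate_sub_le_circle {r₀ : ℝ} (hr₀ : r₀ < 1) {Φ : ℝ → ENNReal}
    {f : ℂ → ℂ} (hf : DifferentiableOn ℂ f (Metric.ball (0:ℂ) 1))
    (hbound : ∀ r θ : ℝ, 1 - r₀ < r → r < 1 →
      (‖deriv f ((r : ℂ) * Complex.exp (θ * Complex.I))‖₊ : ENNReal) ≤ Φ (1 - r))
    {a b : ℝ} (ha : 0 < a) (hab : a ≤ b) (hb : b < r₀)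
    (hfin : ∫⁻ x in Set.Ioc (0:ℝ) b, Φ x ≠ ⊤) (θ : ℝ) :
    ‖f (((1 - b : ℝ) : ℂ) * Complex.exp (θ * Complex.I)) -
      f (((1 - a : ℝ) : ℂ) * Complex.exp (θ * Complex.I))‖ ≤
      (∫⁻ x in Set.Ioc (0:ℝ) b, Φ x).toReal := by
  set e := Complex.exp (θ * Complex.I) with he
  have hnorm : ‖e‖ = 1 := Complex.norm_exp_ofReal_mul_I θ
  have hmem : ∀ x ∈ Set.Icc a b, ((1 - x : ℝ) : ℂ) * e ∈ Metric.ball (0:ℂ) 1 := fun x hx =>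
    dilate_mem_ball (ha.trans_le hx.1) (by linarith [hx.2]) (by simp [hnorm])
  have hderiv : ∀ x ∈ Set.uIcc a b, HasDerivAt (fun x : ℝ => f (((1 - x : ℝ) : ℂ) * e))
      (deriv f (((1 - x : ℝ) : ℂ) * e) * (-e)) x := by
    intro x hx
    rw [Set.uIcc_of_le hab] at hx
    have h1 := (hf.differentiableAt (Metric.isOpen_ball.mem_nhds (hmem x hx))).hasDerivAt
    have h2 : HasDerivAt (fun x : ℝ => ((1 - x : ℝ) : ℂ) * e) (-e) x := by
      have := (((hasDerivAt_id x).const_sub 1).ofReal_comp).mul_const e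
      simpa using this
    exact h1.comp x h2
  have hcont : ContinuousOn (fun x : ℝ => deriv f (((1 - x : ℝ) : ℂ) * e) * (-e))
      (Set.uIcc a b) := by
    rw [Set.uIcc_of_le hab]
    refine ContinuousOn.mul ?_ continuousOn_const
    exact (hf.deriv Metric.isOpen_ball).continuousOn.comp
      (Continuous.continuousOn (by fun_prop)) hmem
  rw [← intervalIntegral.integral_eq_sub_of_hasDerivAt hderiv hcont.intervalIntegrable,
    intervalIntegral.integral_of_le hab, ← toReal_enorm]
  refine ENNReal.toReal_mono hfin ((enorm_integral_le_lintegral_enorm _).trans ?_)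
  refine (setLIntegral_mono' measurableSet_Ioc fun x hx => ?_).trans
    (lintegral_mono_set (Set.Ioc_subset_Ioc_left ha.le))
  have := hbound (1 - x) θ (by linarith [hx.2]) (by linarith [hx.1])
  rw [enorm_mul, enorm_neg, ← ofReal_norm e, hnorm, ENNReal.ofReal_one, mul_one]
  simpa [enorm_eq_nnnorm] using this

lemma norm_dilate_sub_le {r₀ : ℝ} (hr₀ : r₀ < 1) {Φ : ℝ → ENNReal}
    {f : ℂ → ℂ} (hf : DifferentiableOn ℂ f (Metric.ball (0:ℂ) 1))
    (hbound : ∀ r θ : ℝ, 1 - r₀ < r → r < 1 →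
      (‖deriv f ((r : ℂ) * Complex.exp (θ * Complex.I))‖₊ : ENNReal) ≤ Φ (1 - r))
    {a b : ℝ} (ha : 0 < a) (hab : a ≤ b) (hb : b < r₀)
    (hfin : ∫⁻ x in Set.Ioc (0:ℝ) b, Φ x ≠ ⊤) {z : ℂ} (hz : z ∈ Metric.closedBall (0:ℂ) 1) :
    ‖f (((1 - b : ℝ) : ℂ) * z) - f (((1 - a : ℝ) : ℂ) * z)‖ ≤
      (∫⁻ x in Set.Ioc (0:ℝ) b, Φ x).toReal := by
  have hd : ∀ c : ℝ, 0 < c → c < 1 →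
      DiffContOnCl ℂ (fun z => f (((1 - c : ℝ) : ℂ) * z)) (Metric.ball (0:ℂ) 1) := by
    intro c hc hc1
    apply DifferentiableOn.diffContOnCl
    rw [closure_ball _ one_ne_zero]
    exact hf.comp (Differentiable.differentiableOn (by fun_prop))
      fun w hw => dilate_mem_ball hc hc1 hw
  refine Complex.norm_le_of_forall_mem_frontier_norm_le Metric.isBounded_ball
    ((hd b (by linarith) (by linarith)).sub (hd a ha (by linarith))) ?_
    (by rwa [closure_ball _ one_ne_zero])
  intro w hw
  rw [frontier_ball _ one_ne_zero, mem_sphere_zero_iff_norm] at hw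
  have hw' : w = Complex.exp (w.arg * Complex.I) := by
    have := Complex.norm_mul_exp_arg_mul_I w
    rw [hw] at this
    simpa using this.symm
  rw [hw']
  exact norm_dilate_sub_le_circle hr₀ hf hbound ha hab hb hfin _

/-- A Hardy–Littlewood-type lemma: if `f` is holomorphic on the unit disc
and `|f'(r e^{iθ})| ≤ Φ(1-r)` for a function `Φ` Lebesgue-integrable on `[0, r₀)`,
then `f` extends continuously to the closed unit disc. -/
theorem stmt0 (r₀ : ℝ) (hr₀ : r₀ ∈ Set.Ioo (0:ℝ) 1)
    (Φ : ℝ → ENNReal) (hΦmeas : Measurable Φ)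
    (hΦint : ∫⁻ x in Set.Ico (0:ℝ) r₀, Φ x ≠ ⊤)
    (f : ℂ → ℂ) (hf : DifferentiableOn ℂ f (Metric.ball (0:ℂ) 1))
    (hbound : ∀ r θ : ℝ, 1 - r₀ < r → r < 1 →
      (‖deriv f ((r : ℂ) * Complex.exp (θ * Complex.I))‖₊ : ENNReal) ≤ Φ (1 - r)) :
    ∃ F : ℂ → ℂ, ContinuousOn F (Metric.closedBall (0:ℂ) 1) ∧
      ∀ z ∈ Metric.ball (0:ℂ) 1, F z = f z := by
  obtain ⟨h0, h1⟩ := hr₀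
  -- The denominator `n + 2` keeps every `a n` strictly below `r₀`.
  set a : ℕ → ℝ := fun n => r₀ / (n + 2) with ha_def
  have ha_pos : ∀ n, 0 < a n := fun n => by positivity
  have ha_lt : ∀ n, a n < r₀ := fun n => by
    have : (0:ℝ) ≤ n := n.cast_nonneg
    rw [ha_def, div_lt_iff₀ (by positivity)]
    nlinarith
  have ha_anti : Antitone a := fun m n hmn => by
    have : (m:ℝ) ≤ n := by exact_mod_cast hmn
    simp only [ha_def]
    gcongr
  have ha_lim : Filter.Tendsto a Filter.atTop (nhds 0) :=
    Filter.Tendsto.div_atTop tendsto_const_nhds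
      (Filter.tendsto_atTop_add_const_right _ _ tendsto_natCast_atTop_atTop)
  have hsub : ∀ n, Set.Ioc 0 (a n) ⊆ Set.Ico 0 r₀ := fun n x hx =>
    ⟨hx.1.le, hx.2.trans_lt (ha_lt n)⟩
  have hfin : ∀ n, ∫⁻ x in Set.Ioc (0:ℝ) (a n), Φ x ≠ ⊤ := fun n =>
    ne_top_of_le_ne_top hΦint (lintegral_mono_set (hsub n))
  have hI : Filter.Tendsto (fun n => (∫⁻ x in Set.Ioc (0:ℝ) (a n), Φ x).toReal)
      Filter.atTop (nhds 0) := by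
    have hvol : Filter.Tendsto ((volume.restrict (Set.Ico 0 r₀)) ∘ fun n => Set.Ioc 0 (a n))
        Filter.atTop (nhds 0) := by
      have : Filter.Tendsto (fun n => ENNReal.ofReal (a n)) Filter.atTop (nhds 0) := by
        simpa using ENNReal.tendsto_ofReal ha_lim
      refine tendsto_of_tendsto_of_tendsto_of_le_of_le tendsto_const_nhds this
        (fun _ => zero_le) fun n => ?_
      simpa using Measure.restrict_apply_le (μ := volume) (Set.Ico 0 r₀) (Set.Ioc 0 (a n))
    have h := tendsto_setLIntegral_zero hΦint hvol
    have h' := (ENNReal.tendsto_toReal ENNReal.zero_ne_top).comp h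
    simp only [ENNReal.toReal_zero] at h'
    refine h'.congr fun n => ?_
    simp only [Function.comp]
    rw [Measure.restrict_restrict_of_subset (hsub n)]
  set g : ℕ → ℂ → ℂ := fun n z => f (((1 - a n : ℝ) : ℂ) * z) with hg
  have hcauchy : UniformCauchySeqOn g Filter.atTop (Metric.closedBall (0:ℂ) 1) := by
    rw [Metric.uniformCauchySeqOn_iff]
    intro ε hε
    obtain ⟨N, hN⟩ := Filter.eventually_atTop.1 (hI.eventually_lt_const hε)
    have key : ∀ m n, N ≤ m → m ≤ n → ∀ z ∈ Metric.closedBall (0:ℂ) 1,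
        dist (g m z) (g n z) < ε := fun m n hm hmn z hz => by
      rw [dist_eq_norm]
      exact (norm_dilate_sub_le h1 hf hbound (ha_pos n) (ha_anti hmn) (ha_lt m) (hfin m)
        hz).trans_lt (hN m hm)
    refine ⟨N, fun m hm n hn z hz => ?_⟩
    rcases le_total m n with h | h
    · exact key m n hm h z hz
    · rw [dist_comm]
      exact key n m hn h z hz
  have hex : ∀ z, ∃ w, z ∈ Metric.closedBall (0:ℂ) 1 →
      Filter.Tendsto (fun n => g n z) Filter.atTop (nhds w) := by
    intro z
    by_cases hz : z ∈ Metric.closedBall (0:ℂ) 1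
    · obtain ⟨w, hw⟩ := cauchySeq_tendsto_of_complete (hcauchy.cauchySeq hz)
      exact ⟨w, fun _ => hw⟩
    · exact ⟨0, fun h => absurd h hz⟩
  choose F hF using hex
  refine ⟨F, ?_, ?_⟩
  · refine (hcauchy.tendstoUniformlyOn_of_tendsto fun z hz => hF z hz).continuousOn
      (Filter.Frequently.of_forall fun n => ?_)
    exact hf.continuousOn.comp (Continuous.continuousOn (by fun_prop))
      fun w hw => dilate_mem_ball (ha_pos n) ((ha_lt n).trans h1) hw
  · intro z hz
    refine tendsto_nhds_unique (hF z (Metric.ball_subset_closedBall hz)) ?_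
    have hfz : ContinuousAt f z :=
      (hf.differentiableAt (Metric.isOpen_ball.mem_nhds hz)).continuousAt
    refine hfz.tendsto.comp ?_
    have hc : Continuous fun x : ℝ => ((1 - x : ℝ) : ℂ) * z := by fun_prop
    simpa [Function.comp_def] using (hc.tendsto 0).comp ha_lim
end

section
/- Let r₀ ∈ (0,1) and let Φ : [0,r₀) → [0,+∞] be Lebesgue-integrable on [0,r₀). Let f be holomorphic on 𝔻 and suppose that |f'(r·e^{iθ})| ≤ Φ(1−r) for all r with 1−r₀ < r < 1 and all θ ∈ ℝ. Then the radial boundary-value function f*, defined by f*(e^{iθ}) := lim_{r→1⁻} f(r·e^{iθ}), is a well-defined continuous function on the unit circle ∂𝔻. -/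
open MeasureTheory

/-!
By the fundamental theorem of calculus along a radius, for `1 - r₀ < r ≤ s < 1` and `|z| = 1`,
`|f (s z) - f (r z)| ≤ ∫ t in r..s, |f' (t z)| ≤ ∫ t in r..1, Φ (1 - t)`. The right-hand side does
not depend on `z` and tends to `0` as `r → 1⁻` because `Φ` is integrable. Hence the continuous
functions `z ↦ f (r z)` are uniformly Cauchy on the unit circle as `r → 1⁻`, so they converge
uniformly there, and the limit is continuous.
-/

open Filter Set Topology

/-- The increment of `f` along the radius through `z` is controlled by the integral of any
majorant `Ψ` of the radial size of `f'`. -/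
lemma edist_radial_le (f : ℂ → ℂ) (hf : DifferentiableOn ℂ f (Metric.ball (0:ℂ) 1))
    (Ψ : ℝ → ENNReal) (z : ℂ) (hz : ‖z‖ = 1) (a : ℝ) (ha : 0 < a)
    (hb : ∀ t : ℝ, a < t → t < 1 → ‖deriv f ((t : ℂ) * z)‖ₑ ≤ Ψ t)
    (r s : ℝ) (har : a < r) (hrs : r ≤ s) (hs : s < 1) :
    edist (f ((r : ℂ) * z)) (f ((s : ℂ) * z)) ≤ ∫⁻ t in Ioo r 1, Ψ t := by
  have hmem : ∀ t ∈ Icc r s, (t : ℂ) * z ∈ Metric.ball (0:ℂ) 1 := by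
    intro t ht
    have h0 : 0 ≤ t := (ha.trans har).le.trans ht.1
    simpa [hz, abs_of_nonneg h0] using ht.2.trans_lt hs
  have hder : ∀ t ∈ uIcc r s,
      HasDerivAt (fun t : ℝ => f ((t : ℂ) * z)) (deriv f ((t : ℂ) * z) * z) t := by
    intro t ht
    rw [uIcc_of_le hrs] at ht
    have h1 := (hf.differentiableAt (Metric.isOpen_ball.mem_nhds (hmem t ht))).hasDerivAt
    have h2 : HasDerivAt (fun t : ℝ => (t : ℂ) * z) z t := by
      simpa using (Complex.ofRealCLM.hasDerivAt (x := t)).mul_const z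
    exact h1.comp t h2
  have hcont : ContinuousOn (fun t : ℝ => deriv f ((t : ℂ) * z) * z) (uIcc r s) := by
    rw [uIcc_of_le hrs]
    have := (hf.deriv Metric.isOpen_ball).continuousOn.comp
      (f := fun t : ℝ => (t : ℂ) * z) (s := Icc r s) (by fun_prop) hmem
    exact this.mul continuousOn_const
  have hftc := intervalIntegral.integral_eq_sub_of_hasDerivAt hder hcont.intervalIntegrable
  rw [edist_comm, edist_eq_enorm_sub, ← hftc, intervalIntegral.integral_of_le hrs]
  calc _ ≤ ∫⁻ t in Ioc r s, ‖deriv f ((t : ℂ) * z) * z‖ₑ := enorm_integral_le_lintegral_enorm _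
    _ ≤ ∫⁻ t in Ioc r s, Ψ t := by
      refine setLIntegral_mono' measurableSet_Ioc fun t ht => ?_
      have hz' : ‖z‖ₑ = 1 := by rw [← ofReal_norm, hz, ENNReal.ofReal_one]
      rw [enorm_mul, hz', mul_one]
      exact hb t (har.trans ht.1) (ht.2.trans_lt hs)
    _ ≤ _ := lintegral_mono_set (Ioc_subset_Ioo_right hs)

/-- The tails of the reflected majorant `t ↦ Φ (1 - t)` at `1` are infinitesimal. -/
lemma tendsto_tail (r₀ : ℝ) (hr₀ : 0 < r₀) (Φ : ℝ → ENNReal)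
    (hΦint : ∫⁻ x in Ico (0:ℝ) r₀, Φ x ≠ ⊤) :
    Tendsto (fun r : ℝ => ∫⁻ t in Ioo r 1, Φ (1 - t)) (𝓝[<] 1) (𝓝 0) := by
  have hfin : ∫⁻ t in Ioo (1 - r₀) 1, Φ (1 - t) ≠ ⊤ := by
    have h := (volume.measurePreserving_sub_left (1:ℝ)).setLIntegral_comp_preimage_emb
      (MeasurableEquiv.subLeft (1:ℝ)).measurableEmbedding Φ (Ioo 0 r₀)
    have hpre : (fun t : ℝ => 1 - t) ⁻¹' Ioo 0 r₀ = Ioo (1 - r₀) 1 := by simp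
    rw [hpre] at h
    rw [h]
    exact ne_top_of_le_ne_top hΦint (lintegral_mono_set Ioo_subset_Ico_self)
  have hvol : Tendsto (fun r : ℝ => (volume.restrict (Ioo (1 - r₀) 1)) (Ioo r 1))
      (𝓝[<] 1) (𝓝 0) := by
    have h1 : Tendsto (fun r : ℝ => ENNReal.ofReal (1 - r)) (𝓝[<] 1) (𝓝 0) := by
      have : Continuous fun r : ℝ => ENNReal.ofReal (1 - r) :=
        ENNReal.continuous_ofReal.comp (by fun_prop)
      simpa using (this.tendsto 1).mono_left nhdsWithin_le_nhds
    refine tendsto_of_tendsto_of_tendsto_of_le_of_le tendsto_const_nhds h1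
      (fun _ => zero_le) fun r => ?_
    exact (Measure.restrict_apply_le _ _).trans_eq Real.volume_Ioo
  refine (tendsto_setLIntegral_zero hfin hvol).congr' ?_
  have hev : ∀ᶠ r : ℝ in 𝓝[<] 1, 1 - r₀ < r :=
    nhdsWithin_le_nhds (lt_mem_nhds (by linarith))
  filter_upwards [hev] with r hr
  rw [Measure.restrict_restrict measurableSet_Ioo,
    inter_eq_left.2 (Ioo_subset_Ioo_left hr.le)]

/-- Under the Hardy–Littlewood-type hypothesis, the radial boundary-value
function `f*` is a well-defined continuous function on the unit circle. -/
theorem stmt2 (r₀ : ℝ) (hr₀ : r₀ ∈ Set.Ioo (0:ℝ) 1)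
    (Φ : ℝ → ENNReal) (hΦmeas : Measurable Φ)
    (hΦint : ∫⁻ x in Set.Ico (0:ℝ) r₀, Φ x ≠ ⊤)
    (f : ℂ → ℂ) (hf : DifferentiableOn ℂ f (Metric.ball (0:ℂ) 1))
    (hbound : ∀ r θ : ℝ, 1 - r₀ < r → r < 1 →
      (‖deriv f ((r : ℂ) * Complex.exp (θ * Complex.I))‖₊ : ENNReal) ≤ Φ (1 - r)) :
    ∃ g : ℂ → ℂ, ContinuousOn g (Metric.sphere (0:ℂ) 1) ∧
      ∀ θ : ℝ, Filter.Tendsto (fun r : ℝ => f ((r : ℂ) * Complex.exp (θ * Complex.I)))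
        (nhdsWithin 1 (Set.Iio 1)) (nhds (g (Complex.exp (θ * Complex.I)))) := by
  obtain ⟨h0, h1⟩ := hr₀
  have hev : ∀ᶠ r : ℝ in 𝓝[<] 1, 1 - r₀ < r ∧ r < 1 :=
    Ioo_mem_nhdsLT (by linarith)
  have hb : ∀ z : ℂ, ‖z‖ = 1 → ∀ t : ℝ, 1 - r₀ < t → t < 1 →
      ‖deriv f ((t : ℂ) * z)‖ₑ ≤ Φ (1 - t) := by
    intro z hz t ht ht1
    have := hbound t z.arg ht ht1
    have hz' := Complex.norm_mul_exp_arg_mul_I z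
    rw [hz, Complex.ofReal_one, one_mul] at hz'
    rwa [hz'] at this
  have hcauchy : UniformCauchySeqOn (fun (r : ℝ) (z : ℂ) => f ((r : ℂ) * z)) (𝓝[<] 1)
      (Metric.sphere (0:ℂ) 1) := by
    intro u hu
    obtain ⟨ε, hε, hεu⟩ := mem_uniformity_edist.1 hu
    have htail := (tendsto_tail r₀ h0 Φ hΦint).eventually (gt_mem_nhds hε)
    have hgood := hev.and htail
    filter_upwards [hgood.prod_mk hgood] with p hp z hz
    obtain ⟨⟨⟨ha, ha1⟩, hat⟩, ⟨hc, hc1⟩, hct⟩ := hp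
    have hz1 : ‖z‖ = 1 := by simpa using hz
    apply hεu
    rcases le_total p.1 p.2 with h | h
    · exact (edist_radial_le f hf _ z hz1 (1 - r₀) (by linarith) (hb z hz1) _ _ ha h hc1).trans_lt
        hat
    · rw [edist_comm]
      exact (edist_radial_le f hf _ z hz1 (1 - r₀) (by linarith) (hb z hz1) _ _ hc h ha1).trans_lt
        hct
  have hlim : ∀ z ∈ Metric.sphere (0:ℂ) 1,
      ∃ w, Tendsto (fun r : ℝ => f ((r : ℂ) * z)) (𝓝[<] 1) (𝓝 w) := fun z hz =>
    cauchy_map_iff_exists_tendsto.1 (hcauchy.cauchy_map hz)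
  choose! g hg using hlim
  refine ⟨g, ?_, fun θ => hg _ (by simp [Complex.norm_exp_ofReal_mul_I])⟩
  refine (hcauchy.tendstoUniformlyOn_of_tendsto hg).continuousOn (Eventually.frequently ?_)
  filter_upwards [hev] with r hr
  refine hf.continuousOn.comp (by fun_prop) fun z hz => ?_
  have hz1 : ‖z‖ = 1 := by simpa using hz
  have hr0 : 0 ≤ r := by linarith [hr.1]
  simpa [hz1, abs_of_nonneg hr0] using hr.2
end

section
/- Let f be holomorphic on 𝔻. Suppose there exist r₀ ∈ (0,1) and a positive non-increasing function Φ : [0,r₀) → [0,+∞] such that (a) the function x ↦ (log(1/x))ⁿ·Φ(x) is Lebesgue-integrable on [0,r₀) for every integer n ≥ 0, and (b) |f'(r·e^{iθ})| ≤ Φ(1−r) for all r ∈ (1−r₀,1) and all θ ∈ ℝ. Then f extends to a continuous function on the closed unit disc whose boundary value f* (the restriction of the extension to ∂𝔻) is log-Dini continuous. -/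
/-!
Write `H(δ) = ∫₀^δ Φ`. The heart of the matter is a Hardy–Littlewood type estimate
(`edist_le_three_mul`): if `δ ≤ r₀/3`, both `z` and `w` lie in the annulus `1 - δ < |·| < 1`, and
`|z - w| ≤ δ`, then `|f z - f w| ≤ 3 H(δ)`. One moves from `z` radially to `(1 - δ) z`, at cost at
most `∫₀^δ Φ` (`edist_radial_le`), then along a chord from `(1 - δ) z` to `(1 - δ) w`, at cost at
most `δ Φ(δ) ≤ H(δ)` (`edist_chord_le`), and radially back to `w`.

Since `H(δ) → 0`, `f` satisfies the Cauchy criterion at every boundary point and so extends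
continuously to the closed disc; letting `z`, `w` tend to the circle gives `ω(δ) ≤ 3 H(δ)`.
Finally, Tonelli's theorem (`lintegral_log_pow_div_mul_le`) yields
`∫₀^c log(1/x)ⁿ H(x)/x dx ≤ ∫₀^c log(1/t)ⁿ⁺¹ Φ(t) dt < ∞`, because `log(1/x) ≤ log(1/t)` for
`x ≥ t` and `∫_t^1 dx/x = log(1/t)`. Away from `0` the integrand is bounded.
-/

open MeasureTheory

/-- The modulus of continuity of a function `g` on the unit circle,
parametrized by the angle: `ω_g(δ) = sup {|g(e^{iθ}) - g(e^{iφ})| : |θ - φ| ≤ δ}`. -/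
noncomputable def omegaMod (g : ℂ → ℂ) (δ : ℝ) : ℝ :=
  sSup {d : ℝ | ∃ θ φ : ℝ, |θ - φ| ≤ δ ∧
    d = ‖g (Complex.exp (θ * Complex.I)) - g (Complex.exp (φ * Complex.I))‖}

/-- A function `g` on the unit circle is log-Dini continuous if
`∫₀¹ (log(1/x))ⁿ ω_g(x)/x dx < ∞` for every integer `n ≥ 0`. -/
def LogDini (g : ℂ → ℂ) : Prop :=
  ∀ n : ℕ, ∫⁻ x in Set.Ioo (0:ℝ) 1,
    ENNReal.ofReal ((Real.log (1/x)) ^ n * omegaMod g x / x) ≠ ⊤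

/-! ### The Hardy–Littlewood estimate inside the disc -/

lemma enorm_deriv_le {f : ℂ → ℂ} {r₀ : ℝ} {Φ : ℝ → ENNReal}
    (hb : ∀ r θ : ℝ, 1 - r₀ < r → r < 1 →
      (‖deriv f ((r : ℂ) * Complex.exp (θ * Complex.I))‖₊ : ENNReal) ≤ Φ (1 - r))
    {z : ℂ} (h1 : 1 - r₀ < ‖z‖) (h2 : ‖z‖ < 1) : ‖deriv f z‖ₑ ≤ Φ (1 - ‖z‖) := by
  have h := hb ‖z‖ z.arg h1 h2
  rw [Complex.norm_mul_exp_arg_mul_I] at h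
  exact h

/-- The derivative of `f` at a point of modulus at most `1 - x` is controlled by `Φ x`. -/
lemma enorm_deriv_le_of_le {f : ℂ → ℂ} {r₀ : ℝ} {Φ : ℝ → ENNReal}
    (hΦanti : AntitoneOn Φ (Set.Ico (0:ℝ) r₀))
    (hb : ∀ r θ : ℝ, 1 - r₀ < r → r < 1 →
      (‖deriv f ((r : ℂ) * Complex.exp (θ * Complex.I))‖₊ : ENNReal) ≤ Φ (1 - r))
    {z : ℂ} {x : ℝ} (hx : 0 ≤ x) (h1 : 1 - r₀ < ‖z‖) (h2 : ‖z‖ < 1) (h3 : ‖z‖ ≤ 1 - x) :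
    ‖deriv f z‖ₑ ≤ Φ x :=
  (enorm_deriv_le hb h1 h2).trans
    (hΦanti ⟨hx, by linarith⟩ ⟨by linarith, by linarith⟩ (by linarith))

/-- Moving radially from `z` to `(1 - δ) z` costs at most `∫₀^δ Φ`. -/
lemma edist_radial_le_s3 {f : ℂ → ℂ} (hf : DifferentiableOn ℂ f (Metric.ball (0:ℂ) 1))
    {r₀ : ℝ} {Φ : ℝ → ENNReal}
    (hΦanti : AntitoneOn Φ (Set.Ico (0:ℝ) r₀))
    (hb : ∀ r θ : ℝ, 1 - r₀ < r → r < 1 →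
      (‖deriv f ((r : ℂ) * Complex.exp (θ * Complex.I))‖₊ : ENNReal) ≤ Φ (1 - r))
    {z : ℂ} {δ : ℝ} (hδ : 0 < δ) (hδ1 : δ < 1) (hz : ‖z‖ < 1) (h1 : 1 - r₀ < (1 - δ) * ‖z‖) :
    edist (f z) (f ((1 - δ : ℝ) * z)) ≤ ∫⁻ x in Set.Ico 0 δ, Φ x := by
  have hnorm : ∀ t ∈ Set.Icc (1 - δ) 1, ‖(t : ℂ) * z‖ = t * ‖z‖ := by
    intro t ht
    rw [norm_mul, Complex.norm_real, Real.norm_of_nonneg (by linarith [ht.1])]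
  have hlt : ∀ t ∈ Set.Icc (1 - δ) 1, ‖(t : ℂ) * z‖ < 1 := by
    intro t ht
    rw [hnorm t ht]
    nlinarith [ht.1, ht.2, norm_nonneg z]
  have hmaps : Set.MapsTo (fun t : ℝ => (t : ℂ) * z) (Set.Icc (1 - δ) 1)
      (Metric.ball (0:ℂ) 1) := by
    intro t ht
    simpa using hlt t ht
  have hd : ∀ t ∈ Set.uIcc (1 - δ) 1,
      HasDerivAt (fun t : ℝ => f ((t : ℂ) * z)) (deriv f ((t : ℂ) * z) * z) t := by
    intro t ht
    rw [Set.uIcc_of_le (by linarith)] at ht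
    have hfd : HasDerivAt f (deriv f ((t : ℂ) * z)) ((t : ℂ) * z) :=
      (hf.differentiableAt (Metric.isOpen_ball.mem_nhds (hmaps ht))).hasDerivAt
    have hg : HasDerivAt (fun t : ℝ => (t : ℂ) * z) z t := by
      simpa using (Complex.ofRealCLM.hasDerivAt (x := t)).mul_const z
    exact hfd.comp t hg
  have hcont : ContinuousOn (fun t : ℝ => deriv f ((t : ℂ) * z) * z) (Set.Icc (1 - δ) 1) := by
    refine ContinuousOn.mul ?_ continuousOn_const
    exact ((hf.deriv Metric.isOpen_ball).continuousOn).comp (by fun_prop) hmaps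
  have hint : IntervalIntegrable (fun t : ℝ => deriv f ((t : ℂ) * z) * z) volume (1 - δ) 1 :=
    ContinuousOn.intervalIntegrable (by rwa [Set.uIcc_of_le (by linarith)])
  have hftc := intervalIntegral.integral_eq_sub_of_hasDerivAt hd hint
  rw [Complex.ofReal_one, one_mul] at hftc
  rw [edist_eq_enorm_sub, ← hftc, intervalIntegral.integral_of_le (by linarith)]
  refine (enorm_integral_le_lintegral_enorm _).trans ?_
  have hbd : ∀ t ∈ Set.Ioc (1 - δ) 1, ‖deriv f ((t : ℂ) * z) * z‖ₑ ≤ Φ (1 - t) := by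
    intro t ht
    have ht' : t ∈ Set.Icc (1 - δ) 1 := ⟨ht.1.le, ht.2⟩
    have hn := hnorm t ht'
    have h0 := norm_nonneg z
    rw [enorm_mul]
    have hz1 : ‖z‖ₑ ≤ 1 := by
      rw [← ofReal_norm]
      exact ENNReal.ofReal_le_one.2 hz.le
    calc ‖deriv f ((t : ℂ) * z)‖ₑ * ‖z‖ₑ ≤ ‖deriv f ((t : ℂ) * z)‖ₑ * 1 := by gcongr
      _ = ‖deriv f ((t : ℂ) * z)‖ₑ := mul_one _
      _ ≤ Φ (1 - t) := by
        refine enorm_deriv_le_of_le hΦanti hb (by linarith [ht.2]) ?_ (hlt t ht') ?_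
        · rw [hn]
          nlinarith [ht.1]
        · rw [hn]
          nlinarith [ht.1, ht.2]
  refine (setLIntegral_mono' measurableSet_Ioc hbd).trans (le_of_eq ?_)
  rw [← lintegral_indicator measurableSet_Ioc, ← lintegral_indicator measurableSet_Ico,
    ← lintegral_sub_left_eq_self (μ := volume) _ (1:ℝ)]
  refine lintegral_congr fun t => ?_
  simp only [Set.indicator, Set.mem_Ioc, Set.mem_Ico, sub_sub_cancel]
  congr 1
  rw [eq_iff_iff]
  constructor <;> rintro ⟨h, h'⟩ <;> constructor <;> linarith

/-- The chord from `(1 - δ) z` to `(1 - δ) w` stays in `|·| ≤ 1 - δ`, where `|f'| ≤ Φ δ`; and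
`δ Φ(δ) ≤ ∫₀^δ Φ` by monotonicity. -/
lemma edist_chord_le {f : ℂ → ℂ} (hf : DifferentiableOn ℂ f (Metric.ball (0:ℂ) 1))
    {r₀ : ℝ} {Φ : ℝ → ENNReal}
    (hΦanti : AntitoneOn Φ (Set.Ico (0:ℝ) r₀))
    (hb : ∀ r θ : ℝ, 1 - r₀ < r → r < 1 →
      (‖deriv f ((r : ℂ) * Complex.exp (θ * Complex.I))‖₊ : ENNReal) ≤ Φ (1 - r))
    {z w : ℂ} {δ : ℝ} (hδ : 0 < δ) (hδ1 : δ < 1) (hδr : δ < r₀) (hz : ‖z‖ < 1) (hw : ‖w‖ < 1)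
    (hzw : ‖z - w‖ ≤ δ) (h1 : 1 - r₀ < (1 - δ) * ‖z‖ - δ) :
    edist (f ((1 - δ : ℝ) * z)) (f ((1 - δ : ℝ) * w)) ≤ ∫⁻ x in Set.Ico 0 δ, Φ x := by
  have hδΦ : ENNReal.ofReal δ * Φ δ ≤ ∫⁻ x in Set.Ico 0 δ, Φ x := by
    calc ENNReal.ofReal δ * Φ δ = ∫⁻ x in Set.Ico 0 δ, Φ δ := by
          rw [setLIntegral_const, Real.volume_Ico, sub_zero, mul_comm]
      _ ≤ _ := setLIntegral_mono' measurableSet_Ico fun x hx =>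
          hΦanti ⟨hx.1, hx.2.trans hδr⟩ ⟨hδ.le, hδr⟩ hx.2.le
  refine le_trans ?_ hδΦ
  by_cases htop : Φ δ = ⊤
  · rw [htop, ENNReal.mul_top (by simpa using hδ)]
    exact le_top
  set a : ℂ := (1 - δ : ℝ) * z with ha
  set b : ℂ := (1 - δ : ℝ) * w with hbdef
  have hna : ‖a‖ = (1 - δ) * ‖z‖ := by
    rw [ha, norm_mul, Complex.norm_real, Real.norm_of_nonneg (by linarith)]
  have hnb : ‖b‖ = (1 - δ) * ‖w‖ := by
    rw [hbdef, norm_mul, Complex.norm_real, Real.norm_of_nonneg (by linarith)]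
  have hab : ‖a - b‖ ≤ δ := by
    rw [ha, hbdef, ← mul_sub, norm_mul, Complex.norm_real, Real.norm_of_nonneg (by linarith)]
    nlinarith [norm_nonneg (z - w)]
  -- The convex set on which the mean value inequality is used contains the whole chord.
  set s : Set ℂ := Metric.closedBall 0 (1 - δ) ∩ Metric.closedBall a δ with hs
  have hconv : Convex ℝ s := (convex_closedBall _ _).inter (convex_closedBall _ _)
  have hsn : ∀ x ∈ s, ‖x‖ ≤ 1 - δ ∧ ‖a‖ - δ ≤ ‖x‖ := by
    intro x hx
    have h2 : ‖x‖ ≤ 1 - δ := by simpa using hx.1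
    have h3 : ‖x - a‖ ≤ δ := by simpa [dist_eq_norm] using hx.2
    refine ⟨h2, ?_⟩
    have := norm_sub_norm_le a x
    rw [norm_sub_rev] at this
    linarith
  have has : a ∈ s := by
    refine ⟨?_, Metric.mem_closedBall_self hδ.le⟩
    rw [mem_closedBall_zero_iff, hna]
    nlinarith
  have hbs : b ∈ s := by
    refine ⟨?_, ?_⟩
    · rw [mem_closedBall_zero_iff, hnb]
      nlinarith
    · rw [mem_closedBall_iff_norm, norm_sub_rev]
      exact hab
  have hmv : ‖f a - f b‖ ≤ (Φ δ).toReal * ‖a - b‖ := by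
    refine hconv.norm_image_sub_le_of_norm_deriv_le (fun x hx => ?_) (fun x hx => ?_) hbs has
    · refine hf.differentiableAt (Metric.isOpen_ball.mem_nhds ?_)
      rw [mem_ball_zero_iff]
      linarith [(hsn x hx).1]
    · have hx' := hsn x hx
      have := enorm_deriv_le_of_le hΦanti hb hδ.le (z := x) (by linarith [hx'.2])
        (by linarith [hx'.1]) hx'.1
      rw [← toReal_enorm]
      exact ENNReal.toReal_mono htop this
  rw [edist_eq_enorm_sub, ← ofReal_norm, ← ENNReal.ofReal_toReal htop,
    ← ENNReal.ofReal_mul hδ.le, mul_comm δ]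
  exact ENNReal.ofReal_le_ofReal
    (hmv.trans (mul_le_mul_of_nonneg_left hab ENNReal.toReal_nonneg))

lemma edist_le_three_mul {f : ℂ → ℂ} (hf : DifferentiableOn ℂ f (Metric.ball (0:ℂ) 1))
    {r₀ : ℝ} (hr₀ : r₀ ∈ Set.Ioo (0:ℝ) 1) {Φ : ℝ → ENNReal}
    (hΦanti : AntitoneOn Φ (Set.Ico (0:ℝ) r₀))
    (hb : ∀ r θ : ℝ, 1 - r₀ < r → r < 1 →
      (‖deriv f ((r : ℂ) * Complex.exp (θ * Complex.I))‖₊ : ENNReal) ≤ Φ (1 - r))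
    {z w : ℂ} {δ : ℝ} (hδ : 0 < δ) (hδr : δ ≤ r₀ / 3) (hz : ‖z‖ < 1) (hw : ‖w‖ < 1)
    (hz' : 1 - δ < ‖z‖) (hw' : 1 - δ < ‖w‖) (hzw : ‖z - w‖ ≤ δ) :
    edist (f z) (f w) ≤ 3 * ∫⁻ x in Set.Ico 0 δ, Φ x := by
  have hr1 := hr₀.2
  have hr0 := hr₀.1
  have hδ1 : δ < 1 := by linarith
  -- `(1 - δ)² - δ = 1 - 3 δ + δ² > 1 - r₀`: all the points used lie where `hb` applies.
  have e1 : 1 - r₀ < (1 - δ) * ‖z‖ - δ := by nlinarith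
  have e2 : 1 - r₀ < (1 - δ) * ‖w‖ - δ := by nlinarith
  have h1 := edist_radial_le_s3 hf hΦanti hb hδ hδ1 hz (by linarith)
  have h2 := edist_chord_le hf hΦanti hb hδ hδ1 (by linarith) hz hw hzw e1
  have h3 := edist_radial_le_s3 hf hΦanti hb hδ hδ1 hw (by linarith)
  rw [edist_comm] at h3
  refine (edist_triangle4 _ _ _ _).trans ((add_le_add (add_le_add h1 h2) h3).trans (le_of_eq ?_))
  ring

/-! ### The Tonelli estimate -/

/-- `∫_t^c log(1/x)ⁿ dx/x ≤ log(1/t)ⁿ⁺¹` for `0 < t < c ≤ 1`. -/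
lemma lintegral_log_pow_div_le (n : ℕ) {t c : ℝ} (ht : 0 < t) (htc : t < c) (hc : c ≤ 1) :
    ∫⁻ x in Set.Ioc t c, ENNReal.ofReal ((Real.log (1/x)) ^ n / x) ≤
      ENNReal.ofReal ((Real.log (1/t)) ^ (n + 1)) := by
  have hlog : ∀ x ∈ Set.Ioc t c, 0 ≤ Real.log (1/x) := fun x hx =>
    Real.log_nonneg (by rw [le_div_iff₀ (ht.trans hx.1)]; linarith [hx.2])
  have hlogt : 0 ≤ Real.log (1/t) := Real.log_nonneg (by rw [le_div_iff₀ ht]; linarith)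
  have hint : IntervalIntegrable (fun x : ℝ => x⁻¹) volume t c := by
    refine ContinuousOn.intervalIntegrable (ContinuousOn.inv₀ continuousOn_id fun x hx => ?_)
    rw [Set.uIcc_of_le htc.le] at hx
    exact (ht.trans_le hx.1).ne'
  calc ∫⁻ x in Set.Ioc t c, ENNReal.ofReal ((Real.log (1/x)) ^ n / x)
      ≤ ∫⁻ x in Set.Ioc t c, ENNReal.ofReal ((Real.log (1/t)) ^ n) * ENNReal.ofReal x⁻¹ := by
        refine setLIntegral_mono' measurableSet_Ioc fun x hx => ?_
        have hx0 := ht.trans hx.1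
        rw [← ENNReal.ofReal_mul (pow_nonneg hlogt n), div_eq_mul_inv]
        refine ENNReal.ofReal_le_ofReal (mul_le_mul_of_nonneg_right ?_ (inv_nonneg.2 hx0.le))
        refine pow_le_pow_left₀ (hlog x hx) (Real.log_le_log (by positivity) ?_) n
        exact one_div_le_one_div_of_le ht hx.1.le
    _ = ENNReal.ofReal ((Real.log (1/t)) ^ n) * ∫⁻ x in Set.Ioc t c, ENNReal.ofReal x⁻¹ :=
        lintegral_const_mul' _ _ ENNReal.ofReal_ne_top
    _ = ENNReal.ofReal ((Real.log (1/t)) ^ n) * ENNReal.ofReal (Real.log (c/t)) := by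
        rw [← integral_inv_of_pos ht (ht.trans htc), intervalIntegral.integral_of_le htc.le,
          ofReal_integral_eq_lintegral_ofReal hint.1]
        filter_upwards [ae_restrict_mem measurableSet_Ioc] with x hx
        exact inv_nonneg.2 (ht.trans hx.1).le
    _ ≤ _ := by
        rw [pow_succ, ENNReal.ofReal_mul (pow_nonneg hlogt n)]
        gcongr
        exact div_pos (ht.trans htc) ht

lemma lintegral_log_pow_div_mul_le {Φ : ℝ → ENNReal} (hΦmeas : Measurable Φ) (n : ℕ) {c : ℝ}
    (hc : c ≤ 1) :
    ∫⁻ x in Set.Ioo 0 c, ENNReal.ofReal ((Real.log (1/x)) ^ n / x) * ∫⁻ t in Set.Ico 0 x, Φ t ≤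
      ∫⁻ t in Set.Ioo 0 c, ENNReal.ofReal ((Real.log (1/t)) ^ (n + 1)) * Φ t := by
  have hk : Measurable fun x : ℝ => ENNReal.ofReal ((Real.log (1/x)) ^ n / x) := by fun_prop
  set k : ℝ → ENNReal := fun x => ENNReal.ofReal ((Real.log (1/x)) ^ n / x) with hkdef
  calc ∫⁻ x in Set.Ioo 0 c, k x * ∫⁻ t in Set.Ico 0 x, Φ t
      = ∫⁻ x in Set.Ioo 0 c, ∫⁻ t in Set.Ioo 0 c,
          {p : ℝ × ℝ | p.2 < p.1}.indicator (fun p => k p.1 * Φ p.2) (x, t) := by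
        refine setLIntegral_congr_fun measurableSet_Ioo fun x hx => ?_
        have e : ∀ t : ℝ, {p : ℝ × ℝ | p.2 < p.1}.indicator (fun p => k p.1 * Φ p.2) (x, t) =
            (Set.Iio x).indicator (fun t => k x * Φ t) t := fun t => rfl
        simp only [e]
        rw [lintegral_indicator measurableSet_Iio, Measure.restrict_restrict measurableSet_Iio,
          lintegral_const_mul _ hΦmeas]
        have hset : Set.Iio x ∩ Set.Ioo 0 c = Set.Ioo 0 x := by
          ext t
          simp only [Set.mem_inter_iff, Set.mem_Iio, Set.mem_Ioo]
          exact ⟨fun h => ⟨h.2.1, h.1⟩, fun h => ⟨h.2, h.1, h.2.trans hx.2⟩⟩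
        rw [hset, setLIntegral_congr Ioo_ae_eq_Ico]
    _ = ∫⁻ t in Set.Ioo 0 c, ∫⁻ x in Set.Ioo 0 c,
          {p : ℝ × ℝ | p.2 < p.1}.indicator (fun p => k p.1 * Φ p.2) (x, t) := by
        refine lintegral_lintegral_swap (Measurable.aemeasurable ?_)
        exact Measurable.indicator (by fun_prop) (measurableSet_lt measurable_snd measurable_fst)
    _ ≤ ∫⁻ t in Set.Ioo 0 c, ENNReal.ofReal ((Real.log (1/t)) ^ (n + 1)) * Φ t := by
        refine setLIntegral_mono' measurableSet_Ioo fun t ht => ?_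
        have e : ∀ x : ℝ, {p : ℝ × ℝ | p.2 < p.1}.indicator (fun p => k p.1 * Φ p.2) (x, t) =
            (Set.Ioi t).indicator (fun x => k x * Φ t) x := fun x => rfl
        simp only [e]
        rw [lintegral_indicator measurableSet_Ioi, Measure.restrict_restrict measurableSet_Ioi,
          lintegral_mul_const _ hk]
        gcongr
        refine le_trans (lintegral_mono_set ?_) (lintegral_log_pow_div_le n ht.1 ht.2 hc)
        exact fun x hx => ⟨hx.1, hx.2.2.le⟩

/-! ### Boundary values -/

lemma tendsto_lintegral_Ico {Φ : ℝ → ENNReal} {r₀ : ℝ}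
    (hΦ : ∫⁻ x in Set.Ico (0:ℝ) r₀, Φ x ≠ ⊤) (hr₀ : 0 < r₀) :
    Filter.Tendsto (fun δ => ∫⁻ x in Set.Ico 0 δ, Φ x) (nhdsWithin 0 (Set.Ioi 0)) (nhds 0) := by
  have hvol : Filter.Tendsto ((volume.restrict (Set.Ico (0:ℝ) r₀)) ∘ fun δ => Set.Ico (0:ℝ) δ)
      (nhdsWithin 0 (Set.Ioi 0)) (nhds 0) := by
    have h0 : Filter.Tendsto (fun δ : ℝ => ENNReal.ofReal δ) (nhdsWithin 0 (Set.Ioi 0))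
        (nhds 0) := by
      have := (ENNReal.continuous_ofReal.tendsto 0).mono_left
        (nhdsWithin_le_nhds (s := Set.Ioi (0:ℝ)))
      simpa using this
    refine tendsto_of_tendsto_of_tendsto_of_le_of_le tendsto_const_nhds h0
      (fun _ => zero_le) fun δ => ?_
    refine (Measure.restrict_apply_le _ _).trans ?_
    simp
  refine (tendsto_setLIntegral_zero hΦ hvol).congr' ?_
  filter_upwards [Ioo_mem_nhdsGT hr₀] with δ hδ
  rw [Measure.restrict_restrict measurableSet_Ico, Set.inter_eq_left.2]
  exact Set.Ico_subset_Ico_right hδ.2.le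

lemma norm_exp_sub_exp_le (θ φ : ℝ) :
    ‖Complex.exp (θ * Complex.I) - Complex.exp (φ * Complex.I)‖ ≤ |θ - φ| := by
  have h : Complex.exp (θ * Complex.I) - Complex.exp (φ * Complex.I) =
      Complex.exp (φ * Complex.I) * (Complex.exp (Complex.I * ((θ - φ : ℝ) : ℂ)) - 1) := by
    rw [mul_sub, ← Complex.exp_add, mul_one]
    congr 2
    push_cast
    ring
  rw [h, norm_mul, Complex.norm_exp_ofReal_mul_I, one_mul]
  exact Real.norm_exp_I_mul_ofReal_sub_one_le

/-- If `f` is holomorphic on the unit disc and `|f'(r e^{iθ})| ≤ Φ(1-r)` for a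
positive non-increasing `Φ : [0,r₀) → [0,∞]` with `(log(1/·))ⁿ Φ` integrable for all `n`, then
`f` extends continuously to the closed disc with log-Dini continuous boundary value. -/
theorem stmt3 (f : ℂ → ℂ) (hf : DifferentiableOn ℂ f (Metric.ball (0:ℂ) 1))
    (r₀ : ℝ) (hr₀ : r₀ ∈ Set.Ioo (0:ℝ) 1)
    (Φ : ℝ → ENNReal) (hΦmeas : Measurable Φ)
    (hΦpos : ∀ x ∈ Set.Ico (0:ℝ) r₀, 0 < Φ x)
    (hΦanti : AntitoneOn Φ (Set.Ico (0:ℝ) r₀))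
    (ha : ∀ n : ℕ, ∫⁻ x in Set.Ico (0:ℝ) r₀,
      ENNReal.ofReal ((Real.log (1/x)) ^ n) * Φ x ≠ ⊤)
    (hb : ∀ r θ : ℝ, 1 - r₀ < r → r < 1 →
      (‖deriv f ((r : ℂ) * Complex.exp (θ * Complex.I))‖₊ : ENNReal) ≤ Φ (1 - r)) :
    ∃ F : ℂ → ℂ, ContinuousOn F (Metric.closedBall (0:ℂ) 1) ∧
      (∀ z ∈ Metric.ball (0:ℂ) 1, F z = f z) ∧ LogDini F := by
  have hr0 := hr₀.1
  have hr1 := hr₀.2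
  set H : ℝ → ENNReal := fun δ => ∫⁻ x in Set.Ico 0 δ, Φ x with hH
  have key : ∀ {z w : ℂ} {δ : ℝ}, 0 < δ → δ ≤ r₀ / 3 → ‖z‖ < 1 → ‖w‖ < 1 → 1 - δ < ‖z‖ →
      1 - δ < ‖w‖ → ‖z - w‖ ≤ δ → edist (f z) (f w) ≤ 3 * H δ := fun h1 h2 h3 h4 h5 h6 h7 =>
    edist_le_three_mul hf hr₀ hΦanti hb h1 h2 h3 h4 h5 h6 h7
  have hΦint : ∫⁻ x in Set.Ico (0:ℝ) r₀, Φ x ≠ ⊤ := by simpa using ha 0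
  have hH0 : Filter.Tendsto H (nhdsWithin 0 (Set.Ioi 0)) (nhds 0) :=
    tendsto_lintegral_Ico hΦint hr0
  have hcl : closure (Metric.ball (0:ℂ) 1) = Metric.closedBall 0 1 :=
    closure_ball _ one_ne_zero
  have hlim : ∀ x ∈ Metric.closedBall (0:ℂ) 1,
      ∃ y, Filter.Tendsto f (nhdsWithin x (Metric.ball 0 1)) (nhds y) := by
    intro x hx
    by_cases hxb : x ∈ Metric.ball (0:ℂ) 1
    · exact ⟨f x, hf.continuousOn x hxb⟩
    have hx1 : ‖x‖ = 1 := by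
      simp only [mem_closedBall_zero_iff, mem_ball_zero_iff, not_lt] at hx hxb
      exact le_antisymm hx hxb
    have : (nhdsWithin x (Metric.ball (0:ℂ) 1)).NeBot :=
      mem_closure_iff_nhdsWithin_neBot.1 (hcl ▸ hx)
    refine cauchy_map_iff_exists_tendsto.1 (EMetric.cauchy_iff.2 ⟨Filter.NeBot.ne inferInstance,
      fun ε hε => ?_⟩)
    have h3 : Filter.Tendsto (fun δ => 3 * H δ) (nhdsWithin 0 (Set.Ioi 0)) (nhds 0) := by
      simpa using ENNReal.Tendsto.const_mul (a := 3) hH0 (Or.inr (by simp))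
    obtain ⟨δ, hδε, hδ⟩ := ((h3.eventually_lt_const hε).and
      (Ioo_mem_nhdsGT (show (0:ℝ) < r₀ / 3 by positivity))).exists
    refine ⟨f '' (Metric.ball x (δ / 2) ∩ Metric.ball 0 1), Filter.image_mem_map
      (Filter.inter_mem (mem_nhdsWithin_of_mem_nhds (Metric.ball_mem_nhds x (half_pos hδ.1)))
        self_mem_nhdsWithin), ?_⟩
    rintro _ ⟨z, ⟨hzx, hz⟩, rfl⟩ _ ⟨w, ⟨hwx, hw⟩, rfl⟩
    rw [mem_ball_zero_iff] at hz hw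
    rw [mem_ball_iff_norm] at hzx hwx
    have hδ0 := hδ.1
    have hz2 := norm_sub_norm_le x z
    have hw2 := norm_sub_norm_le x w
    rw [norm_sub_rev] at hz2 hw2
    refine lt_of_le_of_lt (key hδ.1 hδ.2.le hz hw (by linarith) (by linarith) ?_) hδε
    have : ‖z - w‖ ≤ ‖z - x‖ + ‖w - x‖ := by
      rw [norm_sub_rev w x]
      exact norm_sub_le_norm_sub_add_norm_sub _ _ _
    linarith
  have hcont : ContinuousOn (extendFrom (Metric.ball (0:ℂ) 1) f) (Metric.closedBall 0 1) :=
    continuousOn_extendFrom hcl.ge hlim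
  have heq : ∀ z ∈ Metric.ball (0:ℂ) 1, extendFrom (Metric.ball (0:ℂ) 1) f z = f z :=
    fun z hz => extendFrom_eq (subset_closure hz) (hf.continuousOn z hz)
  set F := extendFrom (Metric.ball (0:ℂ) 1) f with hF
  refine ⟨F, hcont, heq, ?_⟩
  -- Approach points of the circle radially to carry the estimate over to `F`.
  have hrad : ∀ u : ℂ, ‖u‖ = 1 → Filter.Tendsto (fun r : ℝ => f (r * u))
      (nhdsWithin 1 (Set.Iio 1)) (nhds (F u)) := by
    intro u hu
    have hmem : u ∈ Metric.closedBall (0:ℂ) 1 := by simp [hu]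
    refine (tendsto_extendFrom (hlim u hmem)).comp (tendsto_nhdsWithin_iff.2 ⟨?_, ?_⟩)
    · have : Filter.Tendsto (fun r : ℝ => (r : ℂ) * u) (nhds 1) (nhds (((1:ℝ) : ℂ) * u)) :=
        Continuous.tendsto (by fun_prop) 1
      rw [Complex.ofReal_one, one_mul] at this
      exact this.mono_left nhdsWithin_le_nhds
    · filter_upwards [Ioo_mem_nhdsLT (show (0:ℝ) < 1 by norm_num)] with r hr
      rw [mem_ball_zero_iff, norm_mul, hu, mul_one, Complex.norm_real,
        Real.norm_of_nonneg hr.1.le]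
      exact hr.2
  have hbdry : ∀ u v : ℂ, ‖u‖ = 1 → ‖v‖ = 1 → ∀ δ : ℝ, 0 < δ → δ ≤ r₀ / 3 → ‖u - v‖ ≤ δ →
      edist (F u) (F v) ≤ 3 * H δ := by
    intro u v hu hv δ hδ hδr huv
    refine le_of_tendsto ((hrad u hu).edist (hrad v hv)) ?_
    filter_upwards [Ioo_mem_nhdsLT (show 1 - δ < 1 by linarith)] with r hr
    have hr' : 0 ≤ r := by linarith [hr.1]
    have hn : ∀ y : ℂ, ‖(r : ℂ) * y‖ = r * ‖y‖ := fun y => by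
      rw [norm_mul, Complex.norm_real, Real.norm_of_nonneg hr']
    refine key hδ hδr ?_ ?_ ?_ ?_ ?_
    · rw [hn, hu, mul_one]; exact hr.2
    · rw [hn, hv, mul_one]; exact hr.2
    · rw [hn, hu, mul_one]; exact hr.1
    · rw [hn, hv, mul_one]; exact hr.1
    · rw [← mul_sub, hn]
      nlinarith [norm_nonneg (u - v), hr.2]
  set c : ℝ := r₀ / 3 with hc
  have hc0 : 0 < c := by positivity
  have hc1 : c < 1 := by linarith
  have hHfin : ∀ δ ≤ c, H δ ≠ ⊤ := fun δ hδ => ne_top_of_le_ne_top hΦint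
    (lintegral_mono_set (Set.Ico_subset_Ico_right (by linarith)))
  have homega : ∀ δ, 0 < δ → δ ≤ c → ENNReal.ofReal (omegaMod F δ) ≤ 3 * H δ := by
    intro δ hδ hδc
    have hfin : 3 * H δ ≠ ⊤ := ENNReal.mul_ne_top (by simp) (hHfin δ hδc)
    refine ENNReal.ofReal_le_of_le_toReal (Real.sSup_le ?_ ENNReal.toReal_nonneg)
    rintro d ⟨θ, φ, hθ, rfl⟩
    have := hbdry _ _ (Complex.norm_exp_ofReal_mul_I θ) (Complex.norm_exp_ofReal_mul_I φ) δ hδ hδc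
      ((norm_exp_sub_exp_le θ φ).trans hθ)
    rw [edist_eq_enorm_sub] at this
    rw [← toReal_enorm]
    exact ENNReal.toReal_mono hfin this
  obtain ⟨M, hM⟩ := (isCompact_closedBall (0:ℂ) 1).exists_bound_of_continuousOn hcont
  have hM0 : 0 ≤ M := (norm_nonneg _).trans (hM 0 (by simp))
  have homegaM : ∀ δ, omegaMod F δ ≤ 2 * M := by
    intro δ
    refine Real.sSup_le ?_ (by linarith)
    rintro d ⟨θ, φ, hθ, rfl⟩
    refine (norm_sub_le _ _).trans ?_
    have h1 := hM (Complex.exp (θ * Complex.I)) (by simp [Complex.norm_exp_ofReal_mul_I])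
    have h2 := hM (Complex.exp (φ * Complex.I)) (by simp [Complex.norm_exp_ofReal_mul_I])
    linarith
  intro n
  have hsub : Set.Ioo (0:ℝ) 1 ⊆ Set.Ioo 0 c ∪ Set.Ico c 1 := fun x hx => by
    rcases lt_or_ge x c with h | h
    · exact Or.inl ⟨hx.1, h⟩
    · exact Or.inr ⟨h, hx.2⟩
  have hlog : ∀ x : ℝ, 0 < x → x < 1 → 0 ≤ Real.log (1/x) := fun x h0 h1 =>
    Real.log_nonneg (by rw [le_div_iff₀ h0]; linarith)
  refine ne_top_of_le_ne_top (ENNReal.add_ne_top.2 ⟨?_, ?_⟩)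
    ((lintegral_mono_set hsub).trans (lintegral_union_le _ _ _))
  · have hstep : ∫⁻ x in Set.Ioo 0 c, ENNReal.ofReal ((Real.log (1/x)) ^ n * omegaMod F x / x) ≤
        3 * ∫⁻ t in Set.Ico (0:ℝ) r₀, ENNReal.ofReal ((Real.log (1/t)) ^ (n + 1)) * Φ t := by
      calc _ ≤ ∫⁻ x in Set.Ioo 0 c, 3 * (ENNReal.ofReal ((Real.log (1/x)) ^ n / x) * H x) := by
            refine setLIntegral_mono' measurableSet_Ioo fun x hx => ?_
            have hnn : 0 ≤ (Real.log (1/x)) ^ n / x :=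
              div_nonneg (pow_nonneg (hlog x hx.1 (hx.2.trans hc1)) n) hx.1.le
            rw [mul_div_right_comm, ENNReal.ofReal_mul hnn, mul_left_comm]
            gcongr
            exact homega x hx.1 hx.2.le
        _ = 3 * ∫⁻ x in Set.Ioo 0 c, ENNReal.ofReal ((Real.log (1/x)) ^ n / x) * H x :=
            lintegral_const_mul' _ _ (by simp)
        _ ≤ _ := by
            refine mul_le_mul' le_rfl ?_
            refine (lintegral_log_pow_div_mul_le hΦmeas n hc1.le).trans (lintegral_mono_set ?_)
            exact fun x hx => ⟨hx.1.le, by linarith [hx.2]⟩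
    exact ne_top_of_le_ne_top (ENNReal.mul_ne_top (by simp) (ha (n + 1))) hstep
  · have hstep : ∫⁻ x in Set.Ico c 1, ENNReal.ofReal ((Real.log (1/x)) ^ n * omegaMod F x / x) ≤
        ∫⁻ x in Set.Ico c 1, ENNReal.ofReal ((Real.log (1/c)) ^ n * (2 * M) / c) := by
      refine setLIntegral_mono' measurableSet_Ico fun x hx => ENNReal.ofReal_le_ofReal ?_
      have hx0 : 0 < x := hc0.trans_le hx.1
      have hlx := hlog x hx0 hx.2
      have hlc := hlog c hc0 hc1
      have hle : Real.log (1/x) ≤ Real.log (1/c) :=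
        Real.log_le_log (by positivity) (one_div_le_one_div_of_le hc0 hx.1)
      have hnum : (Real.log (1/x)) ^ n * omegaMod F x ≤ (Real.log (1/c)) ^ n * (2 * M) :=
        (mul_le_mul_of_nonneg_left (homegaM x) (pow_nonneg hlx n)).trans
          (mul_le_mul_of_nonneg_right (pow_le_pow_left₀ hlx hle n) (by linarith))
      exact div_le_div₀ (mul_nonneg (pow_nonneg hlc n) (by linarith)) hnum hc0 hx.1
    refine ne_top_of_le_ne_top ?_ hstep
    rw [setLIntegral_const, Real.volume_Ico]
    exact ENNReal.mul_ne_top ENNReal.ofReal_ne_top ENNReal.ofReal_ne_top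
end

section
/- Let f be holomorphic on 𝔻 and suppose f extends to a continuous function on the closed unit disc whose boundary value f* (the restriction of the extension to ∂𝔻) is log-Dini continuous. Then there exist r₀ ∈ (0,1) and a positive non-increasing function Φ : [0,r₀) → [0,+∞] such that (a) the function x ↦ (log(1/x))ⁿ·Φ(x) is Lebesgue-integrable on [0,r₀) for every integer n ≥ 0, and (b) |f'(r·e^{iθ})| ≤ Φ(1−r) for all r ∈ (1−r₀,1) and all θ ∈ ℝ. -/
/-!
Write `ω` for the modulus of continuity of the boundary value `F`. Subtracting the constant
`F(e^{iθ})` in Cauchy's formula for the derivative (`deriv_cauchy_sub`) and using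
`|e^{it} - r|² ≥ ((1 - r)² + t²) / 5` for `r > 1/2`, `|t| ≤ π` (`normSq_kernel_lower`) gives
`|f'(r e^{iθ})| ≤ 10 J(1 - r) + B`, where `J(x) = ∫₀¹ ω(t) / (x² + t²) dt`
and the constant `B` accounts for the angles `|t| ≥ 1` (`enorm_deriv_le`). The function
`Φ = 10 J + B + 1` is positive and non-increasing on `[0, ∞)`.

For the integrability of `log(1/x)ⁿ Φ(x)`, Tonelli's theorem reduces the claim to the estimate
`∫₀¹ log(1/x)ⁿ / (x² + t²) dx ≤ C (log(1/t)ⁿ + 1) / t` for `0 < t ≤ 1`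
(`lintegral_log_kernel`), after which the log-Dini condition for the exponents `n` and `0`
applies (`lintegral_log_mul_kernelMajorant`).
-/

open MeasureTheory

/-! ### The Cauchy formula and its kernel -/

/-- Cauchy's formula for `f'`, with an arbitrary constant subtracted from the boundary values.
Only continuity up to the boundary is available, so the Cauchy formula is applied to the
difference quotient `dslope F w`, whose value at `w` is `f'(w)`; the constant may be changed
because `(z - w)⁻²` has vanishing integral. -/
lemma deriv_cauchy_sub {f F : ℂ → ℂ} (hf : DifferentiableOn ℂ f (Metric.ball (0 : ℂ) 1))
    (hF : ContinuousOn F (Metric.closedBall (0 : ℂ) 1))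
    (hFf : ∀ z ∈ Metric.ball (0 : ℂ) 1, F z = f z) {w : ℂ} (hw : w ∈ Metric.ball (0 : ℂ) 1)
    (c : ℂ) :
    (∮ z in C(0, 1), ((z - w) ^ 2)⁻¹ * (F z - c)) = 2 * Real.pi * Complex.I * deriv f w := by
  have hFd : DifferentiableOn ℂ F (Metric.ball (0 : ℂ) 1) := hf.congr hFf
  have hdisj : ∀ z ∈ Metric.sphere (0 : ℂ) 1, z ≠ w := fun z hz =>
    Metric.sphere_disjoint_ball.ne_of_mem hz hw
  have hder : deriv F w = deriv f w :=
    Filter.EventuallyEq.deriv_eq (Filter.eventually_of_mem (Metric.isOpen_ball.mem_nhds hw) hFf)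
  have hc : ContinuousOn (dslope F w) (Metric.closedBall (0 : ℂ) 1) :=
    (continuousOn_dslope (Metric.closedBall_mem_nhds_of_mem hw)).2
      ⟨hF, (hFd w hw).differentiableAt (Metric.isOpen_ball.mem_nhds hw)⟩
  have hd : DifferentiableOn ℂ (dslope F w) (Metric.ball (0 : ℂ) 1) :=
    (Complex.differentiableOn_dslope (Metric.isOpen_ball.mem_nhds hw)).2 hFd
  have h0 := Complex.circleIntegral_sub_inv_smul_of_differentiable_on_off_countable
    Set.countable_empty hw hc
    (fun x hx => (hd x hx.1).differentiableAt (Metric.isOpen_ball.mem_nhds hx.1))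
  rw [dslope_same, hder, smul_eq_mul] at h0
  have hz : (∮ z in C(0, 1), (F w - c) * (z - w) ^ (-2 : ℤ)) = 0 := by
    rw [circleIntegral.integral_const_mul,
      circleIntegral.integral_sub_zpow_of_ne (by norm_num), mul_zero]
  have hci : ContinuousOn (fun z : ℂ => (z - w)⁻¹) (Metric.sphere (0 : ℂ) 1) :=
    (continuousOn_id.sub continuousOn_const).inv₀ fun z hz => sub_ne_zero.2 (hdisj z hz)
  have hI1 : CircleIntegrable (fun z => (z - w)⁻¹ • dslope F w z) 0 1 :=
    ContinuousOn.circleIntegrable zero_le_one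
      (hci.smul (hc.mono Metric.sphere_subset_closedBall))
  have hI2 : CircleIntegrable (fun z => (F w - c) * (z - w) ^ (-2 : ℤ)) 0 1 :=
    ContinuousOn.circleIntegrable zero_le_one
      (continuousOn_const.mul ((hci.pow 2).congr fun z _ => by simp [zpow_neg]))
  have hadd := circleIntegral.integral_add hI1 hI2
  rw [hz, add_zero, h0] at hadd
  rw [← hadd]
  refine circleIntegral.integral_congr zero_le_one fun z hz => ?_
  have hne : z - w ≠ 0 := sub_ne_zero.2 (hdisj z hz)
  simp only [dslope_of_ne F (hdisj z hz), slope_def_module, smul_eq_mul, zpow_neg]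
  norm_cast
  field_simp
  ring

/-- The constant comes from `cos t ≤ 1 - 2 t² / π²` on `[-π, π]` and `2 / π² ≥ 1 / 5`. -/
lemma normSq_kernel_lower {r t : ℝ} (hr : 1 / 2 < r) (ht : |t| ≤ Real.pi) :
    ((1 - r) ^ 2 + t ^ 2) / 5 ≤ ‖Complex.exp (t * Complex.I) - r‖ ^ 2 := by
  have h1 : ‖Complex.exp (t * Complex.I) - r‖ ^ 2 = (1 - r) ^ 2 + 2 * r * (1 - Real.cos t) := by
    rw [← Complex.normSq_eq_norm_sq, Complex.exp_mul_I, ← Complex.ofReal_cos,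
      ← Complex.ofReal_sin, Complex.normSq_apply]
    simp only [Complex.sub_re, Complex.add_re, Complex.mul_re, Complex.sub_im, Complex.add_im,
      Complex.mul_im, Complex.ofReal_re, Complex.ofReal_im, Complex.I_re, Complex.I_im]
    nlinarith [Real.sin_sq_add_cos_sq t]
  have h2 := Real.cos_le_one_sub_mul_cos_sq ht
  have h3 : 1 / 5 ≤ 2 / Real.pi ^ 2 := by
    rw [div_le_div_iff₀ (by norm_num) (by positivity)]
    nlinarith [Real.pi_pos, Real.pi_lt_d2]
  have h4 : t ^ 2 / 5 ≤ 1 - Real.cos t := by nlinarith [mul_le_mul_of_nonneg_right h3 (sq_nonneg t)]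
  rw [h1]
  nlinarith [sq_nonneg (1 - r), Real.cos_le_one t]

/-! ### The modulus of continuity -/

section Modulus

variable {g : ℂ → ℂ} {M : ℝ}

lemma exp_mem_sphere (s : ℝ) : Complex.exp (s * Complex.I) ∈ Metric.sphere (0 : ℂ) 1 := by
  simp [Complex.norm_exp_ofReal_mul_I]

lemma omegaMod_bdd (hM : ∀ z ∈ Metric.sphere (0 : ℂ) 1, ‖g z‖ ≤ M) (δ : ℝ) :
    ∀ d ∈ {d : ℝ | ∃ θ φ : ℝ, |θ - φ| ≤ δ ∧
      d = ‖g (Complex.exp (θ * Complex.I)) - g (Complex.exp (φ * Complex.I))‖}, d ≤ 2 * M := by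
  rintro d ⟨θ, φ, -, rfl⟩
  have := norm_sub_le (g (Complex.exp (θ * Complex.I))) (g (Complex.exp (φ * Complex.I)))
  linarith [hM _ (exp_mem_sphere θ), hM _ (exp_mem_sphere φ)]

lemma omegaMod_nonneg (δ : ℝ) : 0 ≤ omegaMod g δ :=
  Real.sSup_nonneg (by rintro d ⟨θ, φ, -, rfl⟩; exact norm_nonneg _)

lemma omegaMod_mono (hM : ∀ z ∈ Metric.sphere (0 : ℂ) 1, ‖g z‖ ≤ M) :
    MonotoneOn (omegaMod g) (Set.Ioo 0 1) := by
  intro a ha b _ hab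
  refine csSup_le_csSup ⟨2 * M, omegaMod_bdd hM b⟩ ⟨_, 0, 0, by simpa using ha.1.le, rfl⟩ ?_
  rintro d ⟨θ, φ, h, rfl⟩
  exact ⟨θ, φ, h.trans hab, rfl⟩

lemma le_omegaMod (hM : ∀ z ∈ Metric.sphere (0 : ℂ) 1, ‖g z‖ ≤ M) {θ φ δ : ℝ}
    (h : |θ - φ| ≤ δ) :
    ‖g (Complex.exp (θ * Complex.I)) - g (Complex.exp (φ * Complex.I))‖ ≤ omegaMod g δ :=
  le_csSup ⟨2 * M, omegaMod_bdd hM δ⟩ ⟨θ, φ, h, rfl⟩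

end Modulus

/-! ### The logarithmically weighted kernel -/

/-- Splits `log (1/x) = log (1/t) + log (t/x)` and absorbs the powers of `log (t/x)` into
`(t/x)^{1/2}`, which is integrable in `x` at `0`. -/
lemma log_pow_le (n : ℕ) {x t : ℝ} (hx : 0 < x) (hxt : x ≤ t) (ht : t ≤ 1) :
    Real.log (1 / x) ^ n ≤ 2 ^ n * Real.log (1 / t) ^ n
      + 4 ^ n * n.factorial * t ^ (1 / 2 : ℝ) * x ^ (-1 / 2 : ℝ) := by
  have ht0 : 0 < t := hx.trans_le hxt
  have hu : 0 ≤ Real.log (1 / t) := Real.log_nonneg (by rw [le_div_iff₀ ht0]; linarith)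
  have hv : 0 ≤ Real.log (t / x) := Real.log_nonneg (by rw [le_div_iff₀ hx]; linarith)
  have hsum : Real.log (1 / x) = Real.log (1 / t) + Real.log (t / x) := by
    rw [← Real.log_mul (by positivity) (by positivity)]
    congr 1
    field_simp
  have h1 : (Real.log (t / x) / 2) ^ n / n.factorial ≤ Real.exp (Real.log (t / x) / 2) :=
    Real.pow_div_factorial_le_exp _ (by positivity) n
  have h2 : Real.exp (Real.log (t / x) / 2) = t ^ (1 / 2 : ℝ) * x ^ (-1 / 2 : ℝ) := by
    rw [Real.rpow_def_of_pos ht0, Real.rpow_def_of_pos hx, ← Real.exp_add,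
      Real.log_div ht0.ne' hx.ne']
    congr 1
    ring
  rw [h2, div_le_iff₀ (by positivity), div_pow, div_le_iff₀ (by positivity)] at h1
  have h3 : (Real.log (1 / t) + Real.log (t / x)) ^ n ≤
      2 ^ n * (Real.log (1 / t) ^ n + Real.log (t / x) ^ n) := by
    refine (add_pow_le hu hv n).trans ?_
    gcongr
    · norm_num
    · omega
  have h4 : (4 : ℝ) ^ n = 2 ^ n * 2 ^ n := by rw [← mul_pow]; norm_num
  rw [hsum, h4]
  nlinarith [mul_le_mul_of_nonneg_left h1 (by positivity : (0 : ℝ) ≤ 2 ^ n)]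

/-- Integrating the kernel `1 / (x² + t²)` against `log(1/x)ⁿ` costs at most the factor
`(log(1/t)ⁿ + 1) / t`. For `x ≤ t` the kernel is at most `t⁻²` and `log_pow_le` applies; for
`x > t` the logarithm is at most `log(1/t)` and the kernel is at most `x⁻²`. -/
lemma lintegral_log_kernel (n : ℕ) : ∃ C : ℝ, 0 ≤ C ∧ ∀ t ∈ Set.Ioc (0 : ℝ) 1,
    ∫⁻ x in Set.Ioo (0 : ℝ) 1, ENNReal.ofReal (Real.log (1 / x) ^ n / (x ^ 2 + t ^ 2)) ≤
      ENNReal.ofReal (C * (Real.log (1 / t) ^ n + 1) / t) := by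
  refine ⟨2 ^ n + 2 * 4 ^ n * n.factorial + 1, by positivity, fun t ht => ?_⟩
  obtain ⟨ht0, ht1⟩ := ht
  have hL : 0 ≤ Real.log (1 / t) := Real.log_nonneg (by rw [le_div_iff₀ ht0]; linarith)
  set L := Real.log (1 / t) with hLdef
  set K : ℝ := 4 ^ n * n.factorial with hK
  have hK0 : 0 ≤ K := by positivity
  set a : ℝ := 2 ^ n * L ^ n / t ^ 2 with ha
  set b : ℝ := K * t ^ (1 / 2 : ℝ) / t ^ 2 with hb
  have ha0 : 0 ≤ a := by positivity
  have hb0 : 0 ≤ b := by positivity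
  have hsq : t ^ (1 / 2 : ℝ) * t ^ (1 / 2 : ℝ) = t := by
    rw [← Real.rpow_add ht0]; norm_num
  have hnear : ∫⁻ x in Set.Ioc 0 t, ENNReal.ofReal (Real.log (1 / x) ^ n / (x ^ 2 + t ^ 2)) ≤
      ENNReal.ofReal ((2 ^ n * L ^ n + 2 * K) / t) := by
    have hii : IntervalIntegrable (fun x : ℝ => x ^ (-1 / 2 : ℝ)) volume 0 t :=
      intervalIntegral.intervalIntegrable_rpow' (by norm_num)
    have hi : IntervalIntegrable (fun x : ℝ => a + b * x ^ (-1 / 2 : ℝ)) volume 0 t :=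
      intervalIntegrable_const.add (hii.const_mul b)
    have hval : ∫ x in Set.Ioc 0 t, (a + b * x ^ (-1 / 2 : ℝ)) =
        (2 ^ n * L ^ n + 2 * K) / t := by
      rw [← intervalIntegral.integral_of_le ht0.le,
        intervalIntegral.integral_add intervalIntegrable_const (hii.const_mul b),
        intervalIntegral.integral_const_mul, integral_rpow (Or.inl (by norm_num))]
      norm_num
      rw [ha, hb]
      field_simp
      norm_num at hsq
      linear_combination (2 * K) * hsq
    rw [← hval, ofReal_integral_eq_lintegral_ofReal
      ((intervalIntegrable_iff_integrableOn_Ioc_of_le ht0.le).1 hi)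
      ((ae_restrict_iff' measurableSet_Ioc).2 (Filter.Eventually.of_forall fun x hx => by
        have := hx.1
        simp only [Pi.zero_apply]
        positivity))]
    refine setLIntegral_mono' measurableSet_Ioc fun x hx => ENNReal.ofReal_le_ofReal ?_
    have h := log_pow_le n hx.1 hx.2 ht1
    have hx0 := hx.1
    have hlogx : 0 ≤ Real.log (1 / x) :=
      Real.log_nonneg (by rw [le_div_iff₀ hx0]; linarith [hx.2])
    calc Real.log (1 / x) ^ n / (x ^ 2 + t ^ 2) ≤ Real.log (1 / x) ^ n / t ^ 2 := by
          gcongr; nlinarith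
      _ ≤ _ := div_le_div_of_nonneg_right h (by positivity)
      _ = _ := by rw [ha, hb, hK]; ring
  have hfar : ∫⁻ x in Set.Ioo t 1, ENNReal.ofReal (Real.log (1 / x) ^ n / (x ^ 2 + t ^ 2)) ≤
      ENNReal.ofReal (L ^ n / t) := by
    have hi : IntegrableOn (fun x : ℝ => L ^ n * x ^ (-2 : ℝ)) (Set.Ioi t) :=
      (integrableOn_Ioi_rpow_of_lt (by norm_num) ht0).const_mul _
    have hval : ∫ x in Set.Ioi t, L ^ n * x ^ (-2 : ℝ) = L ^ n / t := by
      rw [integral_const_mul, integral_Ioi_rpow_of_lt (by norm_num) ht0]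
      norm_num
      rw [Real.rpow_neg_one]
      ring
    rw [← hval, ofReal_integral_eq_lintegral_ofReal hi
      ((ae_restrict_iff' measurableSet_Ioi).2 (Filter.Eventually.of_forall fun x hx => by
        have : 0 < x := ht0.trans hx
        simp only [Pi.zero_apply]
        positivity))]
    refine (setLIntegral_mono' measurableSet_Ioo fun x hx => ENNReal.ofReal_le_ofReal ?_).trans
      (lintegral_mono_set Set.Ioo_subset_Ioi_self)
    have hx0 : 0 < x := ht0.trans hx.1
    have hlogx : 0 ≤ Real.log (1 / x) :=
      Real.log_nonneg (by rw [le_div_iff₀ hx0]; linarith [hx.2])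
    have hle : Real.log (1 / x) ≤ L :=
      Real.log_le_log (by positivity) (one_div_le_one_div_of_le ht0 hx.1.le)
    rw [Real.rpow_neg hx0.le, ← div_eq_mul_inv]
    norm_cast
    gcongr
    nlinarith
  have hcov : Set.Ioo (0 : ℝ) 1 ⊆ Set.Ioc 0 t ∪ Set.Ioo t 1 := fun x hx =>
    (le_or_gt x t).elim (fun h => Or.inl ⟨hx.1, h⟩) fun h => Or.inr ⟨h, hx.2⟩
  refine (lintegral_mono_set hcov).trans ((lintegral_union_le _ _ _).trans
    ((add_le_add hnear hfar).trans ?_))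
  rw [← ENNReal.ofReal_add (by positivity) (by positivity), ← add_div]
  refine ENNReal.ofReal_le_ofReal (div_le_div_of_nonneg_right ?_ ht0.le)
  have hLn : 0 ≤ L ^ n := by positivity
  have h2n : (0 : ℝ) ≤ 2 ^ n := by positivity
  have : 2 * 4 ^ n * (n.factorial : ℝ) = 2 * K := by rw [hK]; ring
  rw [this]
  nlinarith [mul_nonneg hK0 hLn]

/-! ### The majorant and the derivative bound -/

/-- The function `J(x) = ∫₀¹ ω_g(t) / (x² + t²) dt`, which up to constants dominates
`|f'|` on the circle of radius `1 - x` when `g` is the boundary value of `f`. -/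
noncomputable def kernelMajorant (g : ℂ → ℂ) (x : ℝ) : ENNReal :=
  ∫⁻ t in Set.Ioo (0 : ℝ) 1, ENNReal.ofReal (omegaMod g t / (x ^ 2 + t ^ 2))

lemma kernelMajorant_antitone (g : ℂ → ℂ) :
    AntitoneOn (kernelMajorant g) (Set.Ici 0) := by
  intro x hx y _ hxy
  refine setLIntegral_mono' measurableSet_Ioo fun t ht => ENNReal.ofReal_le_ofReal ?_
  have := omegaMod_nonneg (g := g) t
  have hx0 : 0 ≤ x := hx
  have := ht.1
  gcongr

/-- Follows from `lintegral_log_kernel` at `t = 1`, as `x² + 1 ≤ 2` on `(0, 1)`. -/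
lemma lintegral_log_pow_ne_top (n : ℕ) :
    ∫⁻ x in Set.Ioo (0 : ℝ) 1, ENNReal.ofReal (Real.log (1 / x) ^ n) ≠ ⊤ := by
  obtain ⟨C, -, hC⟩ := lintegral_log_kernel n
  refine ne_top_of_le_ne_top (ENNReal.mul_ne_top (ENNReal.ofReal_ne_top (r := 2))
    (ne_top_of_le_ne_top ENNReal.ofReal_ne_top (hC 1 ⟨one_pos, le_rfl⟩))) ?_
  rw [← lintegral_const_mul' _ _ ENNReal.ofReal_ne_top]
  refine setLIntegral_mono' measurableSet_Ioo fun x hx => ?_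
  rw [← ENNReal.ofReal_mul (by norm_num)]
  refine ENNReal.ofReal_le_ofReal ?_
  have hlogx : 0 ≤ Real.log (1 / x) ^ n :=
    pow_nonneg (Real.log_nonneg (by rw [le_div_iff₀ hx.1]; linarith [hx.2])) n
  rw [← mul_div_assoc, le_div_iff₀ (by positivity)]
  nlinarith [hx.1, hx.2, mul_nonneg hlogx (by nlinarith [hx.1, hx.2] : 0 ≤ 1 - x ^ 2)]

/-- Tonelli's theorem turns the weighted integral of `J` into `∫ ω(t) k(t) dt`, where `k` is the
integral estimated in `lintegral_log_kernel`; the log-Dini condition with exponents `n` and `0`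
makes it finite. -/
lemma lintegral_log_mul_kernelMajorant {g : ℂ → ℂ} {M : ℝ}
    (hM : ∀ z ∈ Metric.sphere (0 : ℂ) 1, ‖g z‖ ≤ M) (hLD : LogDini g) (n : ℕ) :
    ∫⁻ x in Set.Ioo (0 : ℝ) 1, ENNReal.ofReal (Real.log (1 / x) ^ n) * kernelMajorant g x ≠ ⊤ := by
  obtain ⟨C, hC0, hC⟩ := lintegral_log_kernel n
  have hω : AEMeasurable (omegaMod g) (volume.restrict (Set.Ioo (0 : ℝ) 1)) :=
    aemeasurable_restrict_of_monotoneOn measurableSet_Ioo (omegaMod_mono hM)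
  have hswap : ∫⁻ x in Set.Ioo (0 : ℝ) 1,
        ENNReal.ofReal (Real.log (1 / x) ^ n) * kernelMajorant g x =
      ∫⁻ t in Set.Ioo (0 : ℝ) 1, ∫⁻ x in Set.Ioo (0 : ℝ) 1,
        ENNReal.ofReal (Real.log (1 / x) ^ n) *
          ENNReal.ofReal (omegaMod g t / (x ^ 2 + t ^ 2)) := by
    simp only [kernelMajorant, ← lintegral_const_mul' _ _ ENNReal.ofReal_ne_top]
    refine lintegral_lintegral_swap ?_
    refine AEMeasurable.mul (M := ENNReal) (f := fun p : ℝ × ℝ =>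
      ENNReal.ofReal (Real.log (1 / p.1) ^ n)) (g := fun p : ℝ × ℝ =>
      ENNReal.ofReal (omegaMod g p.2 / (p.1 ^ 2 + p.2 ^ 2))) ?_ ?_
    · exact (by fun_prop : Measurable fun p : ℝ × ℝ =>
        ENNReal.ofReal (Real.log (1 / p.1) ^ n)).aemeasurable
    · exact (hω.comp_snd.div (by fun_prop : Measurable fun p : ℝ × ℝ =>
        p.1 ^ 2 + p.2 ^ 2).aemeasurable).ennreal_ofReal
  rw [hswap]
  have hfin : ENNReal.ofReal C * ((∫⁻ t in Set.Ioo (0 : ℝ) 1,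
        ENNReal.ofReal (Real.log (1 / t) ^ n * omegaMod g t / t)) +
      ∫⁻ t in Set.Ioo (0 : ℝ) 1,
        ENNReal.ofReal (Real.log (1 / t) ^ 0 * omegaMod g t / t)) ≠ ⊤ :=
    ENNReal.mul_ne_top ENNReal.ofReal_ne_top (ENNReal.add_ne_top.2 ⟨hLD n, hLD 0⟩)
  refine ne_top_of_le_ne_top hfin ?_
  rw [← lintegral_add_left' (by
      refine AEMeasurable.ennreal_ofReal (AEMeasurable.div (AEMeasurable.mul ?_ hω) ?_)
      · exact (by fun_prop : Measurable fun t : ℝ => Real.log (1 / t) ^ n).aemeasurable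
      · exact aemeasurable_id),
    ← lintegral_const_mul' _ _ ENNReal.ofReal_ne_top]
  refine setLIntegral_mono' measurableSet_Ioo fun t ht => ?_
  have hw := omegaMod_nonneg (g := g) t
  have ht0 := ht.1
  have hL : 0 ≤ Real.log (1 / t) := Real.log_nonneg (by rw [le_div_iff₀ ht0]; linarith [ht.2])
  calc ∫⁻ x in Set.Ioo (0 : ℝ) 1, ENNReal.ofReal (Real.log (1 / x) ^ n) *
          ENNReal.ofReal (omegaMod g t / (x ^ 2 + t ^ 2))
      = ENNReal.ofReal (omegaMod g t) * ∫⁻ x in Set.Ioo (0 : ℝ) 1,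
          ENNReal.ofReal (Real.log (1 / x) ^ n / (x ^ 2 + t ^ 2)) := by
        rw [← lintegral_const_mul' _ _ ENNReal.ofReal_ne_top]
        refine setLIntegral_congr_fun measurableSet_Ioo fun x hx => ?_
        have hlogx : 0 ≤ Real.log (1 / x) ^ n :=
          pow_nonneg (Real.log_nonneg (by rw [le_div_iff₀ hx.1]; linarith [hx.2])) n
        rw [← ENNReal.ofReal_mul hlogx, ← ENNReal.ofReal_mul hw]
        congr 1
        ring
    _ ≤ ENNReal.ofReal (omegaMod g t) *
          ENNReal.ofReal (C * (Real.log (1 / t) ^ n + 1) / t) := by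
        gcongr
        exact hC t ⟨ht0, ht.2.le⟩
    _ = _ := by
        rw [← ENNReal.ofReal_add (by positivity) (by positivity), ← ENNReal.ofReal_mul hw,
          ← ENNReal.ofReal_mul hC0]
        congr 1
        ring

/-- The derivative bound. The Cauchy formula is centred by subtracting `F(e^{iθ})`, and the angle
is shifted by `θ`, so that the boundary integral runs over `t ∈ (-π, π]`. -/
lemma enorm_deriv_le_s4 {f F : ℂ → ℂ} {M : ℝ} (hf : DifferentiableOn ℂ f (Metric.ball (0 : ℂ) 1))
    (hF : ContinuousOn F (Metric.closedBall (0 : ℂ) 1))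
    (hFf : ∀ z ∈ Metric.ball (0 : ℂ) 1, F z = f z)
    (hM : ∀ z ∈ Metric.sphere (0 : ℂ) 1, ‖F z‖ ≤ M) {r θ : ℝ} (hr : 1 / 2 < r) (hr1 : r < 1) :
    ‖deriv f (r * Complex.exp (θ * Complex.I))‖ₑ ≤
      10 * kernelMajorant F (1 - r) + ENNReal.ofReal (10 * M) * ENNReal.ofReal (2 * Real.pi) := by
  have hM0 : 0 ≤ M := (norm_nonneg _).trans (hM _ (exp_mem_sphere 0))
  set w : ℂ := r * Complex.exp (θ * Complex.I) with hw
  set c : ℂ := F (Complex.exp (θ * Complex.I)) with hc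
  have hwb : w ∈ Metric.ball (0 : ℂ) 1 := by
    rw [mem_ball_zero_iff, hw, norm_mul, Complex.norm_exp_ofReal_mul_I, mul_one,
      Complex.norm_real, Real.norm_of_nonneg (by linarith)]
    exact hr1
  set G : ℝ → ℂ := fun s => deriv (circleMap 0 1) s •
    (((circleMap 0 1 s - w) ^ 2)⁻¹ * (F (circleMap 0 1 s) - c)) with hG
  have hper : Function.Periodic G (2 * Real.pi) := fun s => by
    simp only [hG, deriv_circleMap, periodic_circleMap 0 1 s]
  have hcauchy : ∫ t in Set.Ioc (-Real.pi) Real.pi, G (θ + t) =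
      2 * Real.pi * Complex.I * deriv f w := by
    rw [← deriv_cauchy_sub hf hF hFf hwb c, circleIntegral,
      ← intervalIntegral.integral_of_le (by linarith [Real.pi_pos]),
      intervalIntegral.integral_comp_add_left (f := G)]
    have := hper.intervalIntegral_add_eq (θ + -Real.pi) 0
    rw [show θ + -Real.pi + 2 * Real.pi = θ + Real.pi by ring, zero_add] at this
    exact this
  set H : ℝ → ENNReal := (Set.Ioo (0 : ℝ) 1).indicator
    fun t => ENNReal.ofReal (omegaMod F t / ((1 - r) ^ 2 + t ^ 2)) with hH
  have hHint : ∫⁻ t, H t = kernelMajorant F (1 - r) := lintegral_indicator measurableSet_Ioo _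
  -- For `|t| < 1` the numerator is bounded by `ω(|t|)`; for `|t| ≥ 1` the kernel is bounded and
  -- the numerator is at most `2 M`.
  have hpt : ∀ t ∈ Set.Ioc (-Real.pi) Real.pi,
      ‖G (θ + t)‖ₑ ≤ 5 * (H t + H (-t)) + ENNReal.ofReal (10 * M) := by
    intro t ht
    have habs : |t| ≤ Real.pi := abs_le.2 ⟨ht.1.le, ht.2⟩
    have hcm : circleMap 0 1 (θ + t) = Complex.exp ((θ + t : ℝ) * Complex.I) := by
      simp [circleMap]
    have hnum : ‖F (Complex.exp ((θ + t : ℝ) * Complex.I)) - c‖ ≤ omegaMod F |t| :=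
      le_omegaMod hM (by simp)
    have hnum2 : ‖F (Complex.exp ((θ + t : ℝ) * Complex.I)) - c‖ ≤ 2 * M :=
      omegaMod_bdd hM |t| _ ⟨θ + t, θ, by simp, rfl⟩
    have hden : ‖Complex.exp ((θ + t : ℝ) * Complex.I) - w‖ =
        ‖Complex.exp (t * Complex.I) - r‖ := by
      have : Complex.exp ((θ + t : ℝ) * Complex.I) - w =
          Complex.exp (θ * Complex.I) * (Complex.exp (t * Complex.I) - r) := by
        rw [hw, Complex.ofReal_add, add_mul, Complex.exp_add]
        ring
      rw [this, norm_mul, Complex.norm_exp_ofReal_mul_I, one_mul]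
    have hGn : ‖G (θ + t)‖ = ‖F (Complex.exp ((θ + t : ℝ) * Complex.I)) - c‖ /
        ‖Complex.exp (t * Complex.I) - r‖ ^ 2 := by
      simp only [hG, deriv_circleMap, smul_eq_mul, norm_mul, norm_inv, norm_pow, Complex.norm_I,
        hcm, hden]
      rw [Complex.norm_exp_ofReal_mul_I]
      ring
    have hlow := normSq_kernel_lower hr habs
    have hpos : 0 < (1 - r) ^ 2 + t ^ 2 := by nlinarith [sq_nonneg t, sub_pos.2 hr1]
    have hbound : ∀ N : ℝ, ‖F (Complex.exp ((θ + t : ℝ) * Complex.I)) - c‖ ≤ N →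
        ‖G (θ + t)‖ ≤ 5 * (N / ((1 - r) ^ 2 + t ^ 2)) := by
      intro N hN
      have hN0 := (norm_nonneg _).trans hN
      rw [hGn]
      calc _ ≤ N / (((1 - r) ^ 2 + t ^ 2) / 5) := by gcongr
        _ = _ := by field_simp
    rw [← ofReal_norm]
    have h5 : (5 : ENNReal) = ENNReal.ofReal 5 := by simp
    rcases lt_or_ge |t| 1 with h1 | h1
    · refine le_add_right ?_
      refine (ENNReal.ofReal_le_ofReal (hbound _ hnum)).trans ?_
      rw [ENNReal.ofReal_mul (by norm_num), ← h5]
      gcongr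
      rcases lt_trichotomy t 0 with h | h | h
      · rw [abs_of_neg h] at h1 ⊢
        have : H (-t) = ENNReal.ofReal (omegaMod F (-t) / ((1 - r) ^ 2 + t ^ 2)) := by
          rw [hH, Set.indicator_of_mem (Set.mem_Ioo.2 ⟨by linarith, h1⟩), neg_sq]
        rw [this]
        exact le_add_self
      · -- At the centre the modulus of continuity vanishes
        have h0 : omegaMod F |t| = 0 := by
          refine le_antisymm (Real.sSup_nonpos ?_) (omegaMod_nonneg _)
          rintro d ⟨a, b, hab, rfl⟩
          rw [h, abs_zero] at hab
          have : a = b := sub_eq_zero.1 (abs_nonpos_iff.1 hab)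
          simp [this]
        simp [h0]
      · rw [abs_of_pos h] at h1 ⊢
        have : H t = ENNReal.ofReal (omegaMod F t / ((1 - r) ^ 2 + t ^ 2)) := by
          rw [hH, Set.indicator_of_mem (Set.mem_Ioo.2 ⟨h, h1⟩)]
        rw [this]
        exact le_self_add
    · refine le_add_left (ENNReal.ofReal_le_ofReal ((hbound _ hnum2).trans ?_))
      have ht2 : 1 ≤ t ^ 2 := by rw [← sq_abs]; nlinarith
      have : 2 * M / ((1 - r) ^ 2 + t ^ 2) ≤ 2 * M :=
        div_le_self (by positivity) (by nlinarith [sq_nonneg (1 - r)])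
      linarith
  have hHm : ∫⁻ t, (H t + H (-t)) ≤ 2 * kernelMajorant F (1 - r) := by
    have hmeas : AEMeasurable H := by
      refine (aemeasurable_indicator_iff measurableSet_Ioo).2 ?_
      exact ((aemeasurable_restrict_of_monotoneOn measurableSet_Ioo (omegaMod_mono hM)).div
        (by fun_prop : Measurable fun t : ℝ => (1 - r) ^ 2 + t ^ 2).aemeasurable).ennreal_ofReal
    rw [lintegral_add_left' hmeas, lintegral_neg_eq_self H, hHint, two_mul]
  have hmain : ‖2 * Real.pi * Complex.I * deriv f w‖ₑ ≤
      10 * kernelMajorant F (1 - r) +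
        ENNReal.ofReal (10 * M) * ENNReal.ofReal (2 * Real.pi) := by
    rw [← hcauchy]
    calc _ ≤ ∫⁻ t in Set.Ioc (-Real.pi) Real.pi, ‖G (θ + t)‖ₑ :=
          enorm_integral_le_lintegral_enorm _
      _ ≤ ∫⁻ t in Set.Ioc (-Real.pi) Real.pi,
            (5 * (H t + H (-t)) + ENNReal.ofReal (10 * M)) :=
          setLIntegral_mono' measurableSet_Ioc hpt
      _ = 5 * (∫⁻ t in Set.Ioc (-Real.pi) Real.pi, (H t + H (-t))) +
            ENNReal.ofReal (10 * M) * ENNReal.ofReal (2 * Real.pi) := by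
          rw [lintegral_add_right _ measurable_const, lintegral_const_mul' _ _ (by simp),
            setLIntegral_const, Real.volume_Ioc]
          congr 3
          ring
      _ ≤ 5 * (2 * kernelMajorant F (1 - r)) +
            ENNReal.ofReal (10 * M) * ENNReal.ofReal (2 * Real.pi) := by
          gcongr
          exact (setLIntegral_le_lintegral _ _).trans hHm
      _ = _ := by rw [← mul_assoc]; norm_num
  refine le_trans ?_ hmain
  rw [← ofReal_norm, ← ofReal_norm]
  refine ENNReal.ofReal_le_ofReal ?_
  rw [norm_mul]
  refine le_mul_of_one_le_left (norm_nonneg _) ?_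
  simp only [norm_mul, Complex.norm_I, Complex.norm_real, Complex.norm_ofNat, mul_one,
    Real.norm_of_nonneg Real.pi_pos.le]
  linarith [Real.pi_gt_three]

/-- If `f` is holomorphic on the unit disc and extends continuously to the
closed disc with log-Dini continuous boundary value, then there exist `r₀ ∈ (0,1)` and a
positive non-increasing `Φ : [0,r₀) → [0,∞]` with `(log(1/·))ⁿ Φ` integrable for all `n`,
such that `|f'(r e^{iθ})| ≤ Φ(1-r)` for all `r ∈ (1-r₀,1)` and all `θ`. -/
theorem stmt4 (f F : ℂ → ℂ) (hf : DifferentiableOn ℂ f (Metric.ball (0:ℂ) 1))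
    (hF : ContinuousOn F (Metric.closedBall (0:ℂ) 1))
    (hFf : ∀ z ∈ Metric.ball (0:ℂ) 1, F z = f z)
    (hLD : LogDini F) :
    ∃ r₀ ∈ Set.Ioo (0:ℝ) 1, ∃ Φ : ℝ → ENNReal,
      (∀ x ∈ Set.Ico (0:ℝ) r₀, 0 < Φ x) ∧
      AntitoneOn Φ (Set.Ico (0:ℝ) r₀) ∧
      (∀ n : ℕ, ∫⁻ x in Set.Ico (0:ℝ) r₀,
        ENNReal.ofReal ((Real.log (1/x)) ^ n) * Φ x ≠ ⊤) ∧
      (∀ r θ : ℝ, 1 - r₀ < r → r < 1 →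
        (‖deriv f ((r : ℂ) * Complex.exp (θ * Complex.I))‖₊ : ENNReal) ≤ Φ (1 - r)) := by
  obtain ⟨M, hM⟩ := (isCompact_sphere (0 : ℂ) 1).exists_bound_of_continuousOn
    (hF.mono Metric.sphere_subset_closedBall)
  -- The summand `1` makes the majorant positive.
  set B : ENNReal := ENNReal.ofReal (10 * M) * ENNReal.ofReal (2 * Real.pi) + 1 with hB
  have hBtop : B ≠ ⊤ := ENNReal.add_ne_top.2
    ⟨ENNReal.mul_ne_top ENNReal.ofReal_ne_top ENNReal.ofReal_ne_top, ENNReal.one_ne_top⟩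
  refine ⟨1 / 2, ⟨by norm_num, by norm_num⟩, fun x => 10 * kernelMajorant F x + B,
    fun x _ => ?_, ?_, fun n => ?_, fun r θ hr hr1 => ?_⟩
  · exact lt_of_lt_of_le zero_lt_one (le_add_left le_add_self)
  · intro x hx y hy hxy
    have := kernelMajorant_antitone F hx.1 hy.1 hxy
    simp only
    gcongr
  · have hfin := ENNReal.add_ne_top.2
      ⟨ENNReal.mul_ne_top (ENNReal.ofNat_ne_top (n := 10))
        (lintegral_log_mul_kernelMajorant hM hLD n),
        ENNReal.mul_ne_top hBtop (lintegral_log_pow_ne_top n)⟩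
    refine ne_top_of_le_ne_top hfin ?_
    rw [← setLIntegral_congr (Ioo_ae_eq_Ico (a := (0 : ℝ)) (b := 1 / 2))]
    refine (lintegral_mono_set (Set.Ioo_subset_Ioo_right (by norm_num : (1 / 2 : ℝ) ≤ 1))).trans ?_
    rw [← lintegral_const_mul' _ _ ENNReal.ofNat_ne_top, ← lintegral_const_mul' _ _ hBtop,
      ← lintegral_add_right _ (by fun_prop)]
    refine lintegral_mono fun x => le_of_eq ?_
    ring
  · have h := enorm_deriv_le_s4 hf hF hFf hM (θ := θ) (by linarith : 1 / 2 < r) hr1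
    refine h.trans ?_
    simp only [hB]
    gcongr
    exact le_self_add
end

section
/- Let f be holomorphic on 𝔻, let r₀ ∈ (0,1), and let Φ : [0,r₀) → [0,+∞] be a positive non-increasing Lebesgue-integrable function such that |f'(r·e^{iθ})| ≤ Φ(1−r) for all r ∈ (1−r₀,1) and all θ ∈ ℝ. Then f extends continuously to the closed unit disc and its boundary value f* satisfies ω_{f*}(δ) ≤ 3·∫₀^δ Φ(x) dx for every δ with 0 ≤ δ < r₀. -/
/-!
Write `J a = ∫₀^a Φ`. Integrating `f'` along a radius gives `‖f (sζ) - f (rζ)‖ ≤ J (1 - r)` for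
`|ζ| = 1` and `1 - r₀ < r ≤ s < 1` (`radial_bound`), and the maximum principle extends it to `|ζ| ≤ 1`
(`disc_bound`). As `J a → 0` when `a → 0`, the dilates `z ↦ f (rz)` converge uniformly on the closed
disc as `r → 1`, so their limit `F` is the continuous extension, with `‖f (rz) - F z‖ ≤ J (1 - r)`.

For the modulus of continuity, go from `e^{iθ}` radially to `(1 - δ) e^{iθ}`, then along the arc of
radius `1 - δ`, then radially out to `e^{iφ}`. Each radial piece costs at most `J δ`; the arc costs
at most `δ Φ(δ)`, which is at most `J δ` because `Φ` is non-increasing (`arc_bound`).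
-/

open MeasureTheory

open Set Filter Topology

lemma lintegral_reflect (Φ : ℝ → ENNReal) (r s : ℝ) :
    ∫⁻ t in Ioc r s, Φ (1 - t) = ∫⁻ x in Ico (1 - s) (1 - r), Φ x := by
  rw [← lintegral_indicator measurableSet_Ioc, ← lintegral_indicator measurableSet_Ico,
    ← lintegral_sub_left_eq_self ((Ico (1 - s) (1 - r)).indicator Φ) (1 : ℝ)]
  congr 1
  ext t
  by_cases h : t ∈ Ioc r s
  · have h' : 1 - t ∈ Ico (1 - s) (1 - r) := ⟨by linarith [h.2], by linarith [h.1]⟩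
    rw [indicator_of_mem h, indicator_of_mem h']
  · have h' : 1 - t ∉ Ico (1 - s) (1 - r) := fun h' =>
      h ⟨by linarith [h'.2], by linarith [h'.1]⟩
    rw [indicator_of_notMem h, indicator_of_notMem h']

lemma norm_real_mul_exp (t θ : ℝ) : ‖(t : ℂ) * Complex.exp (θ * Complex.I)‖ = |t| := by
  rw [norm_mul, Complex.norm_exp_ofReal_mul_I, mul_one, Complex.norm_real, Real.norm_eq_abs]

lemma radial_bound (f : ℂ → ℂ) (hf : DifferentiableOn ℂ f (Metric.ball (0:ℂ) 1))
    (r₀ : ℝ) (hr₀ : r₀ ∈ Ioo (0:ℝ) 1) (Φ : ℝ → ENNReal)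
    (hb : ∀ r θ : ℝ, 1 - r₀ < r → r < 1 →
      (‖deriv f ((r : ℂ) * Complex.exp (θ * Complex.I))‖₊ : ENNReal) ≤ Φ (1 - r))
    (r s θ : ℝ) (hr : 1 - r₀ < r) (hrs : r ≤ s) (hs : s < 1) :
    ‖f (s * Complex.exp (θ * Complex.I)) - f (r * Complex.exp (θ * Complex.I))‖ₑ
      ≤ ∫⁻ x in Ico (0:ℝ) (1 - r), Φ x := by
  set ζ := Complex.exp (θ * Complex.I) with hζ
  have hζn : ‖ζ‖ = 1 := Complex.norm_exp_ofReal_mul_I θ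
  have hmem : ∀ t ∈ Icc r s, (t : ℂ) * ζ ∈ Metric.ball (0:ℂ) 1 := by
    intro t ht
    rw [mem_ball_zero_iff, norm_real_mul_exp, abs_lt]
    constructor <;> linarith [ht.1, ht.2, hr₀.2]
  have hd : ∀ t ∈ uIcc r s, HasDerivAt (fun t : ℝ => f (t * ζ)) (deriv f (t * ζ) * ζ) t := by
    intro t ht
    rw [uIcc_of_le hrs] at ht
    have h1 := (hf.differentiableAt (Metric.isOpen_ball.mem_nhds (hmem t ht))).hasDerivAt
    have h2 : HasDerivAt (fun t : ℝ => (t : ℂ) * ζ) ζ t := by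
      simpa using (Complex.ofRealCLM.hasDerivAt (x := t)).mul_const ζ
    exact h1.comp t h2
  have hcont : ContinuousOn (fun t : ℝ => deriv f (t * ζ) * ζ) (Icc r s) := by
    refine ContinuousOn.mul ?_ continuousOn_const
    exact (hf.deriv Metric.isOpen_ball).continuousOn.comp (by fun_prop) hmem
  have hint : IntervalIntegrable (fun t : ℝ => deriv f (t * ζ) * ζ) volume r s :=
    ContinuousOn.intervalIntegrable (by rwa [uIcc_of_le hrs])
  have hFTC := intervalIntegral.integral_eq_sub_of_hasDerivAt hd hint
  rw [← hFTC, intervalIntegral.integral_of_le hrs]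
  calc _ ≤ ∫⁻ t in Ioc r s, ‖deriv f (t * ζ) * ζ‖ₑ := enorm_integral_le_lintegral_enorm _
    _ ≤ ∫⁻ t in Ioc r s, Φ (1 - t) := by
        refine setLIntegral_mono' measurableSet_Ioc fun t ht => ?_
        have h1 : ‖ζ‖ₑ = 1 := by rw [← ofReal_norm, hζn, ENNReal.ofReal_one]
        rw [enorm_mul, h1, mul_one]
        exact hb t θ (by linarith [ht.1]) (by linarith [ht.2])
    _ = ∫⁻ x in Ico (1 - s) (1 - r), Φ x := lintegral_reflect Φ r s
    _ ≤ _ := lintegral_mono_set (Ico_subset_Ico_left (by linarith))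

lemma disc_bound (f : ℂ → ℂ) (hf : DifferentiableOn ℂ f (Metric.ball (0:ℂ) 1))
    (r₀ : ℝ) (hr₀ : r₀ ∈ Ioo (0:ℝ) 1) (Φ : ℝ → ENNReal)
    (hΦint : ∫⁻ x in Ico (0:ℝ) r₀, Φ x ≠ ⊤)
    (hb : ∀ r θ : ℝ, 1 - r₀ < r → r < 1 →
      (‖deriv f ((r : ℂ) * Complex.exp (θ * Complex.I))‖₊ : ENNReal) ≤ Φ (1 - r))
    (r s : ℝ) (hr : 1 - r₀ < r) (hrs : r ≤ s) (hs : s < 1) (z : ℂ)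
    (hz : z ∈ Metric.closedBall (0:ℂ) 1) :
    ‖f (s * z) - f (r * z)‖ ≤ (∫⁻ x in Ico (0:ℝ) (1 - r), Φ x).toReal := by
  have hmaps : ∀ t : ℝ, 1 - r₀ < t → t < 1 →
      MapsTo (fun z : ℂ => (t : ℂ) * z) (Metric.closedBall (0:ℂ) 1) (Metric.ball (0:ℂ) 1) := by
    intro t h1 h2 w hw
    rw [mem_closedBall_zero_iff] at hw
    have h0 : 0 < t := by linarith [hr₀.2]
    rw [mem_ball_zero_iff, norm_mul, Complex.norm_real, Real.norm_eq_abs, abs_of_pos h0]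
    nlinarith [norm_nonneg w]
  have hdiff : ∀ t : ℝ, 1 - r₀ < t → t < 1 →
      DifferentiableOn ℂ (fun z : ℂ => f (t * z)) (Metric.closedBall (0:ℂ) 1) :=
    fun t h1 h2 => hf.comp (by fun_prop) (hmaps t h1 h2)
  have hD := (hdiff s (by linarith) hs).sub (hdiff r hr (by linarith))
  have hcl : closure (Metric.ball (0:ℂ) 1) = Metric.closedBall 0 1 :=
    closure_ball 0 one_ne_zero
  refine Complex.norm_le_of_forall_mem_frontier_norm_le (U := Metric.ball (0:ℂ) 1)
    (f := fun z => f (s * z) - f (r * z)) Metric.isBounded_ball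
    ⟨hD.mono Metric.ball_subset_closedBall, by rw [hcl]; exact hD.continuousOn⟩ ?_
    (by rwa [hcl])
  intro w hw
  rw [frontier_ball (0:ℂ) one_ne_zero, mem_sphere_zero_iff_norm] at hw
  have hwe : w = Complex.exp (w.arg * Complex.I) := by
    have := Complex.norm_mul_exp_arg_mul_I w
    rw [hw] at this
    simpa using this.symm
  have h := radial_bound f hf r₀ hr₀ Φ hb r s w.arg hr hrs hs
  rw [← hwe] at h
  have hfin : ∫⁻ x in Ico (0:ℝ) (1 - r), Φ x ≠ ⊤ :=
    ne_top_of_le_ne_top hΦint (lintegral_mono_set (Ico_subset_Ico_right (by linarith)))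
  simpa using ENNReal.toReal_mono hfin h

/-- On the circle of radius `1 - δ` the speed is at most `Φ δ`, and `δ Φ(δ) ≤ ∫₀^δ Φ`. -/
lemma arc_bound (f : ℂ → ℂ) (hf : DifferentiableOn ℂ f (Metric.ball (0:ℂ) 1))
    (r₀ : ℝ) (hr₀ : r₀ ∈ Ioo (0:ℝ) 1) (Φ : ℝ → ENNReal)
    (hΦanti : AntitoneOn Φ (Ico (0:ℝ) r₀))
    (hΦint : ∫⁻ x in Ico (0:ℝ) r₀, Φ x ≠ ⊤)
    (hb : ∀ r θ : ℝ, 1 - r₀ < r → r < 1 →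
      (‖deriv f ((r : ℂ) * Complex.exp (θ * Complex.I))‖₊ : ENNReal) ≤ Φ (1 - r))
    (δ : ℝ) (hδ : 0 < δ) (hδr : δ < r₀) (θ φ : ℝ) (hθφ : |θ - φ| ≤ δ) :
    ‖f ((1 - δ : ℝ) * Complex.exp (θ * Complex.I)) -
      f ((1 - δ : ℝ) * Complex.exp (φ * Complex.I))‖
      ≤ (∫⁻ x in Ico (0:ℝ) δ, Φ x).toReal := by
  have hJ : ∫⁻ x in Ico (0:ℝ) δ, Φ x ≠ ⊤ :=
    ne_top_of_le_ne_top hΦint (lintegral_mono_set (Ico_subset_Ico_right hδr.le))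
  have hle : Φ δ * ENNReal.ofReal δ ≤ ∫⁻ x in Ico (0:ℝ) δ, Φ x := by
    calc Φ δ * ENNReal.ofReal δ = ∫⁻ _ in Ico (0:ℝ) δ, Φ δ := by simp
      _ ≤ _ := setLIntegral_mono' measurableSet_Ico fun x hx =>
          hΦanti ⟨hx.1, hx.2.trans hδr⟩ ⟨hδ.le, hδr⟩ hx.2.le
  have hfin : Φ δ ≠ ⊤ := by
    intro h
    rw [h, ENNReal.top_mul (by simpa using hδ)] at hle
    exact hJ (top_le_iff.mp hle)
  have hρ0 : 0 < 1 - δ := by linarith [hr₀.2]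
  set ρ : ℝ := 1 - δ with hρ
  have hd : ∀ t : ℝ, HasDerivAt (fun t : ℝ => f (ρ * Complex.exp (t * Complex.I)))
      (deriv f (ρ * Complex.exp (t * Complex.I)) *
        (ρ * (Complex.exp (t * Complex.I) * Complex.I))) t := by
    intro t
    have hm : (ρ : ℂ) * Complex.exp (t * Complex.I) ∈ Metric.ball (0:ℂ) 1 := by
      rw [mem_ball_zero_iff, norm_real_mul_exp, abs_of_pos hρ0]
      linarith
    have h1 := (hf.differentiableAt (Metric.isOpen_ball.mem_nhds hm)).hasDerivAt
    have h2 : HasDerivAt (fun t : ℝ => (t : ℂ) * Complex.I) Complex.I t := by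
      simpa using (Complex.ofRealCLM.hasDerivAt (x := t)).mul_const Complex.I
    exact h1.comp t (h2.cexp.const_mul (ρ : ℂ))
  have hbd : ∀ t : ℝ, ‖deriv f (ρ * Complex.exp (t * Complex.I)) *
        (ρ * (Complex.exp (t * Complex.I) * Complex.I))‖ ≤ (Φ δ).toReal := by
    intro t
    have h1 := hb ρ t (by linarith) (by linarith)
    rw [hρ, sub_sub_cancel, ← hρ] at h1
    have h2 := ENNReal.toReal_mono hfin h1
    simp only [ENNReal.coe_toReal, coe_nnnorm] at h2
    rw [norm_mul, ← mul_assoc, norm_mul (_ * _), norm_real_mul_exp, Complex.norm_I,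
      abs_of_pos hρ0]
    nlinarith [norm_nonneg (deriv f (ρ * Complex.exp (t * Complex.I)))]
  have hmv := convex_univ.norm_image_sub_le_of_norm_hasDerivWithin_le
    (fun t _ => (hd t).hasDerivWithinAt) (fun t _ => hbd t) (mem_univ φ) (mem_univ θ)
  have hle' := ENNReal.toReal_mono hJ hle
  rw [ENNReal.toReal_mul, ENNReal.toReal_ofReal hδ.le] at hle'
  refine hmv.trans (le_trans ?_ hle')
  rw [Real.norm_eq_abs]
  exact mul_le_mul_of_nonneg_left hθφ ENNReal.toReal_nonneg

lemma tendsto_J (r₀ : ℝ) (hr₀ : 0 < r₀) (Φ : ℝ → ENNReal)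
    (hΦint : ∫⁻ x in Ico (0:ℝ) r₀, Φ x ≠ ⊤) :
    Tendsto (fun r : ℝ => (∫⁻ x in Ico (0:ℝ) (1 - r), Φ x).toReal) (𝓝[<] 1) (𝓝 0) := by
  have hvol : Tendsto ((volume.restrict (Ico (0:ℝ) r₀)) ∘ fun r : ℝ => Ico (0:ℝ) (1 - r))
      (𝓝[<] 1) (𝓝 0) := by
    have h : Tendsto (fun r : ℝ => ENNReal.ofReal (1 - r)) (𝓝[<] 1) (𝓝 0) := by
      have : Continuous fun r : ℝ => ENNReal.ofReal (1 - r) :=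
        ENNReal.continuous_ofReal.comp (by fun_prop)
      simpa using (this.tendsto 1).mono_left nhdsWithin_le_nhds
    refine tendsto_of_tendsto_of_tendsto_of_le_of_le tendsto_const_nhds h
      (fun _ => zero_le) fun r => ?_
    exact (Measure.restrict_apply_le _ _).trans (by simp)
  have h := tendsto_setLIntegral_zero hΦint hvol
  have h2 := (ENNReal.tendsto_toReal ENNReal.zero_ne_top).comp h
  rw [ENNReal.toReal_zero] at h2
  refine h2.congr' ?_
  filter_upwards [mem_nhdsWithin_of_mem_nhds (Ioi_mem_nhds (by linarith : 1 - r₀ < 1))] with r hr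
  rw [mem_Ioi] at hr
  simp only [Function.comp]
  rw [Measure.restrict_restrict measurableSet_Ico,
    inter_eq_left.mpr (Ico_subset_Ico_right (by linarith))]

/-- Quantitative Hardy–Littlewood lemma: under the hypotheses, `f` extends
continuously to the closed disc and the modulus of continuity of the boundary value is
dominated by `3 ∫₀^δ Φ(x) dx`. -/
theorem stmt5 (f : ℂ → ℂ) (hf : DifferentiableOn ℂ f (Metric.ball (0:ℂ) 1))
    (r₀ : ℝ) (hr₀ : r₀ ∈ Set.Ioo (0:ℝ) 1)
    (Φ : ℝ → ENNReal) (hΦmeas : Measurable Φ)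
    (hΦpos : ∀ x ∈ Set.Ico (0:ℝ) r₀, 0 < Φ x)
    (hΦanti : AntitoneOn Φ (Set.Ico (0:ℝ) r₀))
    (hΦint : ∫⁻ x in Set.Ico (0:ℝ) r₀, Φ x ≠ ⊤)
    (hb : ∀ r θ : ℝ, 1 - r₀ < r → r < 1 →
      (‖deriv f ((r : ℂ) * Complex.exp (θ * Complex.I))‖₊ : ENNReal) ≤ Φ (1 - r)) :
    ∃ F : ℂ → ℂ, ContinuousOn F (Metric.closedBall (0:ℂ) 1) ∧
      (∀ z ∈ Metric.ball (0:ℂ) 1, F z = f z) ∧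
      ∀ δ : ℝ, 0 ≤ δ → δ < r₀ →
        ENNReal.ofReal (omegaMod F δ) ≤ 3 * ∫⁻ x in Set.Ico (0:ℝ) δ, Φ x := by
  have hdisc := disc_bound f hf r₀ hr₀ Φ hΦint hb
  have hJ := tendsto_J r₀ hr₀.1 Φ hΦint
  have hnear : Ioo (1 - r₀) 1 ∈ 𝓝[<] (1:ℝ) := Ioo_mem_nhdsLT (by linarith [hr₀.1])
  have hlim : ∀ z ∈ Metric.closedBall (0:ℂ) 1,
      ∃ w, Tendsto (fun r : ℝ => f (r * z)) (𝓝[<] 1) (𝓝 w) := by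
    intro z hz
    refine CompleteSpace.complete (f := map (fun r : ℝ => f (r * z)) (𝓝[<] 1)) ?_
    rw [Metric.cauchy_iff]
    refine ⟨inferInstance, fun ε hε => ?_⟩
    obtain ⟨a, haJ, ha⟩ := ((hJ.eventually (gt_mem_nhds (half_pos hε))).and hnear).exists
    refine ⟨(fun r : ℝ => f (r * z)) '' Ico a 1, image_mem_map (Ico_mem_nhdsLT ha.2), ?_⟩
    rintro _ ⟨s, hs, rfl⟩ _ ⟨t, ht, rfl⟩
    have h1 := hdisc a s ha.1 hs.1 hs.2 z hz
    have h2 := hdisc a t ha.1 ht.1 ht.2 z hz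
    rw [← dist_eq_norm] at h1 h2
    linarith [dist_triangle_right (f (s * z)) (f (t * z)) (f (a * z))]
  choose! F hF using hlim
  have hFb : ∀ r ∈ Ioo (1 - r₀) 1, ∀ z ∈ Metric.closedBall (0:ℂ) 1,
      ‖F z - f (r * z)‖ ≤ (∫⁻ x in Ico (0:ℝ) (1 - r), Φ x).toReal := by
    intro r hr z hz
    refine le_of_tendsto ((hF z hz).sub_const (f (r * z))).norm ?_
    filter_upwards [Ico_mem_nhdsLT hr.2] with s hs
    exact hdisc r s hr.1 hs.1 hs.2 z hz
  refine ⟨F, ?_, ?_, ?_⟩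
  · have hunif : TendstoUniformlyOn (fun (r : ℝ) (z : ℂ) => f (r * z)) F (𝓝[<] 1)
        (Metric.closedBall (0:ℂ) 1) := by
      rw [Metric.tendstoUniformlyOn_iff]
      intro ε hε
      filter_upwards [hJ.eventually (gt_mem_nhds hε), hnear] with r h1 h2 z hz
      rw [dist_eq_norm]
      exact (hFb r h2 z hz).trans_lt h1
    refine hunif.continuousOn (Eventually.frequently ?_)
    filter_upwards [hnear] with r hr
    refine hf.continuousOn.comp (by fun_prop) fun w hw => ?_
    rw [mem_closedBall_zero_iff] at hw
    have h0 : 0 < r := by linarith [hr₀.2, hr.1]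
    rw [mem_ball_zero_iff, norm_mul, Complex.norm_real, Real.norm_eq_abs, abs_of_pos h0]
    nlinarith [norm_nonneg w, hr.2]
  · intro z hz
    refine tendsto_nhds_unique (hF z (Metric.ball_subset_closedBall hz)) ?_
    have h1 : Tendsto (fun r : ℝ => (r : ℂ) * z) (𝓝[<] 1) (𝓝 z) := by
      have : Continuous fun r : ℝ => (r : ℂ) * z := by fun_prop
      simpa using (this.tendsto 1).mono_left nhdsWithin_le_nhds
    exact ((hf.differentiableAt (Metric.isOpen_ball.mem_nhds hz)).continuousAt.tendsto).comp h1
  · intro δ hδ hδr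
    refine ENNReal.ofReal_le_of_le_toReal (Real.sSup_le ?_ ENNReal.toReal_nonneg)
    rintro _ ⟨θ, φ, hθφ, rfl⟩
    rcases hδ.eq_or_lt with rfl | hδ
    · have : θ = φ := by linarith [abs_nonpos_iff.mp hθφ]
      rw [this, sub_self, norm_zero]
      exact ENNReal.toReal_nonneg
    have hmem : ∀ t : ℝ, Complex.exp (t * Complex.I) ∈ Metric.closedBall (0:ℂ) 1 := fun t => by
      rw [mem_closedBall_zero_iff, Complex.norm_exp_ofReal_mul_I]
    have hr : 1 - δ ∈ Ioo (1 - r₀) 1 := ⟨by linarith, by linarith⟩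
    have h1 := hFb (1 - δ) hr _ (hmem θ)
    have h2 := hFb (1 - δ) hr _ (hmem φ)
    have h3 := arc_bound f hf r₀ hr₀ Φ hΦanti hΦint hb δ hδ hδr θ φ hθφ
    rw [sub_sub_cancel] at h1 h2
    rw [ENNReal.toReal_mul, ENNReal.toReal_ofNat]
    rw [← dist_eq_norm] at h1 h2 h3 ⊢
    rw [dist_comm] at h2
    linarith [dist_triangle4 (F (Complex.exp (θ * Complex.I)))
      (f ((1 - δ : ℝ) * Complex.exp (θ * Complex.I)))
      (f ((1 - δ : ℝ) * Complex.exp (φ * Complex.I))) (F (Complex.exp (φ * Complex.I)))]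
end

section
/- Let f be holomorphic on 𝔻, let r₀ ∈ (0,1), and let Φ : [0,r₀) → [0,+∞] be a positive non-increasing Lebesgue-integrable function such that |f'(r·e^{iθ})| ≤ Φ(1−r) for all r ∈ (1−r₀,1) and all θ ∈ ℝ. Let f*(e^{iθ}) := lim_{r→1⁻} f(r·e^{iθ}) denote the radial boundary value of f (which exists for every θ). Then for all θ₁, θ₂ ∈ ℝ with |θ₂ − θ₁| ≤ π and every ρ ∈ (1−r₀,1), one has |f*(e^{iθ₂}) − f*(e^{iθ₁})| ≤ (2 + |θ₂ − θ₁|/(1−ρ)) · ∫₀^{1−ρ} Φ(s) ds. -/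
open MeasureTheory

/-!
The points `e^{iθ₁}` and `e^{iθ₂}` are joined by going down the radius to `ρ e^{iθ₁}`, along the
circle of radius `ρ` to `ρ e^{iθ₂}`, and back up the other radius. On each radius the increment of
`f` is at most `∫ |f'| ≤ ∫₀^{1-ρ} Φ` (`radial_bound`). On the arc it is at most
`|θ₂ - θ₁| Φ(1-ρ)` (`arc_bound`), and monotonicity gives `(1-ρ) Φ(1-ρ) ≤ ∫₀^{1-ρ} Φ`.
-/

lemma norm_mul_exp_I {r : ℝ} (hr : 0 ≤ r) (θ : ℝ) :
    ‖(r : ℂ) * Complex.exp (θ * Complex.I)‖ = r := by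
  rw [norm_mul, Complex.norm_exp_ofReal_mul_I, mul_one, Complex.norm_real, Real.norm_of_nonneg hr]

lemma mul_exp_I_mem_ball {r : ℝ} (hr : 0 ≤ r) (hr1 : r < 1) (θ : ℝ) :
    (r : ℂ) * Complex.exp (θ * Complex.I) ∈ Metric.ball (0 : ℂ) 1 := by
  rw [mem_ball_zero_iff, norm_mul_exp_I hr]
  exact hr1

lemma lintegral_reflect_le (Φ : ℝ → ENNReal) (ρ R : ℝ) (hR : R < 1) :
    ∫⁻ r in Set.Ioc ρ R, Φ (1 - r) ≤ ∫⁻ s in Set.Ico (0:ℝ) (1 - ρ), Φ s := by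
  rw [← lintegral_indicator measurableSet_Ioc, ← lintegral_indicator measurableSet_Ico,
    ← lintegral_sub_left_eq_self _ (1 : ℝ)]
  refine lintegral_mono fun r => ?_
  refine Set.indicator_apply_le' (fun hr => ?_) fun _ => zero_le
  have hmem : r ∈ Set.Ico (0:ℝ) (1 - ρ) := ⟨by linarith [hr.2], by linarith [hr.1]⟩
  rw [Set.indicator_of_mem hmem, sub_sub_cancel]

lemma radial_increment_le {f : ℂ → ℂ} (hf : DifferentiableOn ℂ f (Metric.ball (0:ℂ) 1))
    {Φ : ℝ → ENNReal} {ρ R θ : ℝ} (hρ : 0 ≤ ρ) (hρR : ρ ≤ R) (hR : R < 1)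
    (hb : ∀ r ∈ Set.Ioc ρ R,
      ‖deriv f ((r : ℂ) * Complex.exp (θ * Complex.I))‖ₑ ≤ Φ (1 - r)) :
    ‖f ((R : ℂ) * Complex.exp (θ * Complex.I)) - f ((ρ : ℂ) * Complex.exp (θ * Complex.I))‖ₑ
      ≤ ∫⁻ s in Set.Ico (0:ℝ) (1 - ρ), Φ s := by
  set e := Complex.exp (θ * Complex.I) with he
  have hmem : ∀ r ∈ Set.uIcc ρ R, (r : ℂ) * e ∈ Metric.ball (0 : ℂ) 1 := by
    intro r hr
    rw [Set.uIcc_of_le hρR] at hr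
    exact mul_exp_I_mem_ball (hρ.trans hr.1) (hr.2.trans_lt hR) θ
  have hderiv : ∀ r ∈ Set.uIcc ρ R,
      HasDerivAt (fun r : ℝ => f ((r : ℂ) * e)) (deriv f ((r : ℂ) * e) * e) r := by
    intro r hr
    have h1 : HasDerivAt f (deriv f ((r : ℂ) * e)) ((r : ℂ) * e) :=
      (hf.differentiableAt (Metric.isOpen_ball.mem_nhds (hmem r hr))).hasDerivAt
    have h2 : HasDerivAt (fun r : ℝ => (r : ℂ) * e) e r := by
      simpa using (Complex.ofRealCLM.hasDerivAt (x := r)).mul_const e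
    exact h1.comp r h2
  have hcont : ContinuousOn (fun r : ℝ => deriv f ((r : ℂ) * e) * e) (Set.uIcc ρ R) :=
    (((hf.deriv Metric.isOpen_ball).continuousOn).comp (by fun_prop) hmem).mul continuousOn_const
  rw [← intervalIntegral.integral_eq_sub_of_hasDerivAt hderiv hcont.intervalIntegrable,
    intervalIntegral.integral_of_le hρR]
  calc ‖∫ r in Set.Ioc ρ R, deriv f ((r : ℂ) * e) * e‖ₑ
      ≤ ∫⁻ r in Set.Ioc ρ R, ‖deriv f ((r : ℂ) * e) * e‖ₑ := enorm_integral_le_lintegral_enorm _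
    _ ≤ ∫⁻ r in Set.Ioc ρ R, Φ (1 - r) := by
        refine setLIntegral_mono' measurableSet_Ioc fun r hr => ?_
        have hunit : ‖e‖ₑ = 1 := by
          rw [← ofReal_norm, he, Complex.norm_exp_ofReal_mul_I, ENNReal.ofReal_one]
        rw [enorm_mul, hunit, mul_one]
        exact hb r hr
    _ ≤ _ := lintegral_reflect_le Φ ρ R hR

/-- The increment of `f` along a radius, from radius `ρ` to the boundary value `w`. -/
lemma radial_bound_s6 {f : ℂ → ℂ} (hf : DifferentiableOn ℂ f (Metric.ball (0:ℂ) 1))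
    {Φ : ℝ → ENNReal} {ρ θ : ℝ} (hρ : 0 ≤ ρ) (hρ1 : ρ < 1)
    (hb : ∀ r ∈ Set.Ioo ρ 1,
      ‖deriv f ((r : ℂ) * Complex.exp (θ * Complex.I))‖ₑ ≤ Φ (1 - r))
    {w : ℂ} (hw : Filter.Tendsto (fun r : ℝ => f ((r : ℂ) * Complex.exp (θ * Complex.I)))
      (nhdsWithin 1 (Set.Iio 1)) (nhds w)) :
    ‖w - f ((ρ : ℂ) * Complex.exp (θ * Complex.I))‖ₑ ≤ ∫⁻ s in Set.Ico (0:ℝ) (1 - ρ), Φ s := by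
  refine le_of_tendsto (hw.sub_const _).enorm ?_
  filter_upwards [Ioo_mem_nhdsLT hρ1] with R hR
  exact radial_increment_le hf hρ hR.1.le hR.2 fun r hr => hb r ⟨hr.1, hr.2.trans_lt hR.2⟩

lemma arc_bound_s6 {f : ℂ → ℂ} (hf : DifferentiableOn ℂ f (Metric.ball (0:ℂ) 1))
    {ρ C : ℝ} (hρ : 0 ≤ ρ) (hρ1 : ρ < 1)
    (hC : ∀ θ : ℝ, ‖deriv f ((ρ : ℂ) * Complex.exp (θ * Complex.I))‖ ≤ C) (θ₁ θ₂ : ℝ) :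
    ‖f ((ρ : ℂ) * Complex.exp (θ₂ * Complex.I)) - f ((ρ : ℂ) * Complex.exp (θ₁ * Complex.I))‖
      ≤ C * |θ₂ - θ₁| := by
  have hderiv : ∀ θ ∈ (Set.univ : Set ℝ),
      HasDerivWithinAt (fun θ : ℝ => f ((ρ : ℂ) * Complex.exp (θ * Complex.I)))
        (deriv f ((ρ : ℂ) * Complex.exp (θ * Complex.I)) *
          ((ρ : ℂ) * (Complex.exp (θ * Complex.I) * Complex.I))) Set.univ θ := by
    intro θ _
    have h1 := (hf.differentiableAt
      (Metric.isOpen_ball.mem_nhds (mul_exp_I_mem_ball hρ hρ1 θ))).hasDerivAt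
    have h2 : HasDerivAt (fun θ : ℝ => (θ : ℂ) * Complex.I) Complex.I θ := by
      simpa using (Complex.ofRealCLM.hasDerivAt (x := θ)).mul_const Complex.I
    exact (h1.comp θ (h2.cexp.const_mul (ρ : ℂ))).hasDerivWithinAt
  refine convex_univ.norm_image_sub_le_of_norm_hasDerivWithin_le hderiv (fun θ _ => ?_)
    (Set.mem_univ θ₁) (Set.mem_univ θ₂)
  rw [norm_mul, ← mul_assoc, norm_mul, norm_mul_exp_I hρ, Complex.norm_I, mul_one]
  calc _ ≤ ‖deriv f ((ρ : ℂ) * Complex.exp (θ * Complex.I))‖ * 1 := by gcongr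
    _ ≤ C := by rw [mul_one]; exact hC θ

lemma mul_le_lintegral_of_antitoneOn {Φ : ℝ → ENNReal} {r₀ t : ℝ}
    (hΦ : AntitoneOn Φ (Set.Ico (0:ℝ) r₀)) (ht : 0 ≤ t) (htr : t < r₀) :
    Φ t * ENNReal.ofReal t ≤ ∫⁻ s in Set.Ico (0:ℝ) t, Φ s := by
  calc Φ t * ENNReal.ofReal t = ∫⁻ _ in Set.Ico (0:ℝ) t, Φ t := by
        rw [setLIntegral_const, Real.volume_Ico, sub_zero]
    _ ≤ _ := setLIntegral_mono' measurableSet_Ico fun s hs =>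
        hΦ ⟨hs.1, hs.2.trans htr⟩ ⟨ht, htr⟩ hs.2.le

/-- Under the Hardy–Littlewood-type hypotheses (with `Φ` positive,
non-increasing and integrable), the radial boundary value `f*` satisfies
`|f*(e^{iθ₂}) - f*(e^{iθ₁})| ≤ (2 + |θ₂ - θ₁|/(1-ρ)) ∫₀^{1-ρ} Φ(s) ds`
for all `θ₁, θ₂` with `|θ₂ - θ₁| ≤ π` and every `ρ ∈ (1-r₀, 1)`. -/
theorem stmt6 (f : ℂ → ℂ) (hf : DifferentiableOn ℂ f (Metric.ball (0:ℂ) 1))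
    (r₀ : ℝ) (hr₀ : r₀ ∈ Set.Ioo (0:ℝ) 1)
    (Φ : ℝ → ENNReal) (hΦmeas : Measurable Φ)
    (hΦpos : ∀ x ∈ Set.Ico (0:ℝ) r₀, 0 < Φ x)
    (hΦanti : AntitoneOn Φ (Set.Ico (0:ℝ) r₀))
    (hΦint : ∫⁻ x in Set.Ico (0:ℝ) r₀, Φ x ≠ ⊤)
    (hb : ∀ r θ : ℝ, 1 - r₀ < r → r < 1 →
      (‖deriv f ((r : ℂ) * Complex.exp (θ * Complex.I))‖₊ : ENNReal) ≤ Φ (1 - r))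
    (g : ℝ → ℂ)
    (hg : ∀ θ : ℝ, Filter.Tendsto (fun r : ℝ => f ((r : ℂ) * Complex.exp (θ * Complex.I)))
      (nhdsWithin 1 (Set.Iio 1)) (nhds (g θ))) :
    ∀ θ₁ θ₂ : ℝ, |θ₂ - θ₁| ≤ Real.pi → ∀ ρ : ℝ, 1 - r₀ < ρ → ρ < 1 →
      ENNReal.ofReal ‖g θ₂ - g θ₁‖ ≤
        ENNReal.ofReal (2 + |θ₂ - θ₁| / (1 - ρ)) * ∫⁻ s in Set.Ico (0:ℝ) (1 - ρ), Φ s := by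
  intro θ₁ θ₂ _ ρ hρ hρ1
  have hρ0 : 0 ≤ ρ := by linarith [hr₀.2]
  have ht : 0 < 1 - ρ := by linarith
  set J := ∫⁻ s in Set.Ico (0:ℝ) (1 - ρ), Φ s with hJ
  set z₁ := f ((ρ : ℂ) * Complex.exp (θ₁ * Complex.I)) with hz₁
  set z₂ := f ((ρ : ℂ) * Complex.exp (θ₂ * Complex.I)) with hz₂
  have hrad : ∀ θ : ℝ, ‖g θ - f ((ρ : ℂ) * Complex.exp (θ * Complex.I))‖ₑ ≤ J := fun θ =>
    radial_bound_s6 hf hρ0 hρ1 (fun r hr => hb r θ (hρ.trans hr.1) hr.2) (hg θ)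
  have hΦt : Φ (1 - ρ) ≤ J / ENNReal.ofReal (1 - ρ) := by
    rw [ENNReal.le_div_iff_mul_le (Or.inl (by simpa using ht)) (Or.inl ENNReal.ofReal_ne_top)]
    exact mul_le_lintegral_of_antitoneOn hΦanti ht.le (by linarith)
  have hJtop : J ≠ ⊤ :=
    ne_top_of_le_ne_top hΦint
      (lintegral_mono_set (Set.Ico_subset_Ico_right (by linarith)))
  have hfin : Φ (1 - ρ) ≠ ⊤ :=
    ne_top_of_le_ne_top (ENNReal.div_ne_top hJtop (by simpa using ht)) hΦt
  have harc : ‖z₂ - z₁‖ₑ ≤ ENNReal.ofReal (|θ₂ - θ₁| / (1 - ρ)) * J := by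
    have h := arc_bound_s6 (C := (Φ (1 - ρ)).toReal) hf hρ0 hρ1 (fun θ => by
      have := ENNReal.toReal_mono hfin (hb ρ θ hρ hρ1)
      simpa using this) θ₁ θ₂
    calc ‖z₂ - z₁‖ₑ ≤ ENNReal.ofReal ((Φ (1 - ρ)).toReal * |θ₂ - θ₁|) := by
          rw [← ofReal_norm]
          exact ENNReal.ofReal_le_ofReal h
      _ = Φ (1 - ρ) * ENNReal.ofReal |θ₂ - θ₁| := by
          rw [ENNReal.ofReal_mul ENNReal.toReal_nonneg, ENNReal.ofReal_toReal hfin]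
      _ ≤ J / ENNReal.ofReal (1 - ρ) * ENNReal.ofReal |θ₂ - θ₁| := by gcongr
      _ = _ := by
          rw [ENNReal.ofReal_div_of_pos ht, div_eq_mul_inv, div_eq_mul_inv]
          ring
  rw [ofReal_norm, ENNReal.ofReal_add zero_le_two (by positivity)]
  have hsplit : g θ₂ - g θ₁ = (g θ₂ - z₂) + (z₂ - z₁) + (z₁ - g θ₁) := by ring
  calc ‖g θ₂ - g θ₁‖ₑ ≤ ‖g θ₂ - z₂‖ₑ + ‖z₂ - z₁‖ₑ + ‖z₁ - g θ₁‖ₑ := by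
        rw [hsplit]
        exact (enorm_add_le _ _).trans (by gcongr; exact enorm_add_le _ _)
    _ ≤ J + ENNReal.ofReal (|θ₂ - θ₁| / (1 - ρ)) * J + J := by
        have h₁ : ‖z₁ - g θ₁‖ₑ ≤ J := by
          rw [← neg_sub, enorm_neg]
          exact hrad θ₁
        gcongr
        exact hrad θ₂
    _ = _ := by
        rw [ENNReal.ofReal_ofNat]
        ring
end

section
/- Let C > 0 and ε ∈ (0,1). Then there exist a constant K' > 0 and δ₀ ∈ (0,1) such that for every δ with 0 < δ < δ₀, ∫₀^δ exp(−C·(log(1/x))^{1−ε}) / x dx ≤ K' · exp(−2^{−ε}·C·(log(1/δ))^{1−ε}). -/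
/-!
Write `c = 2^{-ε} < 1`, `p = 1 - ε > 0` and `L(x) = log (1/x)`. Since `L(x) ≥ L(δ)` on `(0, δ)`,
`exp (-C L(x)^p) = exp (-c C L(x)^p) exp (-(1-c) C L(x)^p)
  ≤ exp (-c C L(δ)^p) exp (-(1-c) C L(x)^p)`,
so the fraction `1 - c` of the exponent is left over to make the integral converge: substituting
`t = L(x)`, `dt = -dx/x`, the remaining factor contributes at most
`∫₀^∞ exp (-(1-c) C t^p) dt`, a finite constant (`lintegral_exp_log_div_le`).
-/

open MeasureTheory

lemma lintegral_exp_neg_rpow_lt_top {b p : ℝ} (hb : 0 < b) (hp : 0 < p) :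
    ∫⁻ t in Set.Ioi (0:ℝ), ENNReal.ofReal (Real.exp (-b * t ^ p)) < ⊤ := by
  have h : IntegrableOn (fun t : ℝ => Real.exp (-b * t ^ p)) (Set.Ioi 0) := by
    simpa using integrableOn_rpow_mul_exp_neg_mul_rpow (s := 0) (by norm_num) hp hb
  exact h.lintegral_lt_top

/-- The substitution `t = log (1/x)`, which maps `(0, δ)` into `(0, ∞)` when `δ ≤ 1`. -/
lemma lintegral_exp_log_div_le {b p δ : ℝ} (hδ : δ ≤ 1) :
    ∫⁻ x in Set.Ioo (0:ℝ) δ, ENNReal.ofReal (Real.exp (-b * (Real.log (1/x)) ^ p) / x)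
      ≤ ∫⁻ t in Set.Ioi (0:ℝ), ENNReal.ofReal (Real.exp (-b * t ^ p)) := by
  have hderiv : ∀ x ∈ Set.Ioo (0:ℝ) δ,
      HasDerivWithinAt (fun x => Real.log (1/x)) (-x⁻¹) (Set.Ioo (0:ℝ) δ) x := by
    intro x hx
    simp only [one_div, Real.log_inv]
    exact (Real.hasDerivAt_log hx.1.ne').neg.hasDerivWithinAt
  have hinj : Set.InjOn (fun x : ℝ => Real.log (1/x)) (Set.Ioo (0:ℝ) δ) := by
    intro x hx y hy h
    simp only [one_div, Real.log_inv, neg_inj] at h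
    exact Real.log_injOn_pos hx.1 hy.1 h
  have hcov := lintegral_image_eq_lintegral_abs_deriv_mul measurableSet_Ioo hderiv hinj
    (fun t => ENNReal.ofReal (Real.exp (-b * t ^ p)))
  calc _ = _ := by
        refine (setLIntegral_congr_fun measurableSet_Ioo fun x hx => ?_).trans hcov.symm
        have hx0 : 0 < x⁻¹ := inv_pos.2 hx.1
        rw [abs_neg, abs_of_pos hx0, ← ENNReal.ofReal_mul hx0.le, div_eq_inv_mul]
    _ ≤ _ := by
        refine lintegral_mono_set ?_
        rintro _ ⟨x, hx, rfl⟩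
        exact Real.log_pos ((one_lt_div hx.1).2 (hx.2.trans_le hδ))

/-- For `C > 0` and `ε ∈ (0,1)` there are `K' > 0` and `δ₀ ∈ (0,1)` such
that for `0 < δ < δ₀`,
`∫₀^δ exp(-C (log(1/x))^{1-ε})/x dx ≤ K' exp(-2^{-ε} C (log(1/δ))^{1-ε})`. -/
theorem stmt13 (C ε : ℝ) (hC : 0 < C) (hε : ε ∈ Set.Ioo (0:ℝ) 1) :
    ∃ K' : ℝ, 0 < K' ∧ ∃ δ₀ ∈ Set.Ioo (0:ℝ) 1, ∀ δ : ℝ, 0 < δ → δ < δ₀ →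
      ∫⁻ x in Set.Ioo (0:ℝ) δ,
          ENNReal.ofReal (Real.exp (-C * (Real.log (1/x)) ^ ((1:ℝ) - ε)) / x)
        ≤ ENNReal.ofReal
            (K' * Real.exp (-(2:ℝ) ^ (-ε) * C * (Real.log (1/δ)) ^ ((1:ℝ) - ε))) := by
  obtain ⟨hε0, hε1⟩ := hε
  have hp : 0 < 1 - ε := by linarith
  have hc0 : 0 < (2:ℝ) ^ (-ε) := by positivity
  have hc1 : (2:ℝ) ^ (-ε) < 1 := Real.rpow_lt_one_of_one_lt_of_neg (by norm_num) (by linarith)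
  generalize (2:ℝ) ^ (-ε) = c at hc0 hc1 ⊢
  generalize 1 - ε = p at hp ⊢
  have hfin := lintegral_exp_neg_rpow_lt_top (mul_pos (sub_pos.2 hc1) hC) hp
  set I := ∫⁻ t in Set.Ioi (0:ℝ), ENNReal.ofReal (Real.exp (-((1 - c) * C) * t ^ p)) with hI
  -- Adding `1` makes the positivity of the constant immediate.
  refine ⟨I.toReal + 1, by positivity, 1 / 2, by norm_num, fun δ hδ0 hδ => ?_⟩
  have hδ1 : δ ≤ 1 := by linarith
  set E := Real.exp (-c * C * (Real.log (1/δ)) ^ p) with hE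
  have hE0 : 0 ≤ E := (Real.exp_pos _).le
  calc _ ≤ ∫⁻ x in Set.Ioo (0:ℝ) δ, ENNReal.ofReal E *
          ENNReal.ofReal (Real.exp (-((1 - c) * C) * (Real.log (1/x)) ^ p) / x) := by
        refine setLIntegral_mono' measurableSet_Ioo fun x hx => ?_
        rw [← ENNReal.ofReal_mul hE0]
        refine ENNReal.ofReal_le_ofReal ?_
        rw [← mul_div_assoc, hE, ← Real.exp_add]
        have hx0 := hx.1
        have hlog : Real.log (1/δ) ^ p ≤ Real.log (1/x) ^ p := by
          refine Real.rpow_le_rpow (Real.log_nonneg ((one_le_div hδ0).2 hδ1)) ?_ hp.le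
          exact Real.log_le_log (by positivity) (one_div_le_one_div_of_le hx0 hx.2.le)
        gcongr
        nlinarith [mul_le_mul_of_nonneg_left hlog (mul_pos hc0 hC).le]
    _ = ENNReal.ofReal E * ∫⁻ x in Set.Ioo (0:ℝ) δ,
          ENNReal.ofReal (Real.exp (-((1 - c) * C) * (Real.log (1/x)) ^ p) / x) :=
        lintegral_const_mul' _ _ ENNReal.ofReal_ne_top
    _ ≤ ENNReal.ofReal E * I := by gcongr; exact lintegral_exp_log_div_le hδ1
    _ ≤ ENNReal.ofReal E * ENNReal.ofReal (I.toReal + 1) := by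
        gcongr
        exact (ENNReal.le_ofReal_iff_toReal_le hfin.ne (by positivity)).2 (by linarith)
    _ = _ := by rw [← ENNReal.ofReal_mul hE0, mul_comm]
end
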